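/- arXiv:1106.0895 — 3 statements merged into one kernel-verified Lean document; each statement's English description precedes it below -/
import Mathlib

section
/- Fix a pmf p on 𝒳ⁿ with p(xⁿ) > 0 for all xⁿ, λ ≥ 0 and a distortion function d: 𝒳ⁿ×𝒳̂ⁿ→[0,∞). Consider the Blahut–Arimoto-type iteration started from the uniform causal conditioning pmf q⁰(x̂ⁿ||x^{n−1}) = |𝒳̂|^{−n}: for k ≥ 1, r^k(x̂ⁿ|xⁿ) = q^{k−1}(x̂ⁿ||x^{n−1})2^{−λd(xⁿ,x̂ⁿ)} / Σ_{x̂ⁿ} q^{k−1}(x̂ⁿ||x^{n−1})2^{−λd(xⁿ,x̂ⁿ)}, with q^k the causal conditioning pmf induced by p·r^k. Then, with K(r,q) = I_FF(r,q) + λ·Σ_{xⁿ,x̂ⁿ} p(xⁿ)r(x̂ⁿ|xⁿ)d(xⁿ,x̂ⁿ), the iterates satisfy lim_{k→∞} K(r^k,q^k) = min over conditional pmfs r of [ I(X̂ⁿ→Xⁿ) + λ·Σ_{xⁿ,x̂ⁿ} p(xⁿ)r(x̂ⁿ|xⁿ)d(xⁿ,x̂ⁿ) ]. -/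
open scoped BigOperators
open Filter

noncomputable section

namespace FFRD

variable {X Y : Type} [Fintype X] [DecidableEq X] [Fintype Y] [DecidableEq Y] {n : ℕ}

/-- `p` is a probability mass function on a finite type. -/
def IsPMF {α : Type} [Fintype α] (p : α → ℝ) : Prop :=
  (∀ a, 0 ≤ p a) ∧ ∑ a, p a = 1

/-- `r` is a conditional pmf on `Fin n → Y` given `Fin n → X`. -/
def IsCondPMF (r : (Fin n → X) → (Fin n → Y) → ℝ) : Prop :=
  (∀ x y, 0 ≤ r x y) ∧ ∀ x, ∑ y, r x y = 1

/-- The causal conditioning pmf `q_r(ŷⁿ‖x^{n-1})` induced by the joint pmf `p(x)·r(y|x)`: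
the product over `i` of the conditional probabilities `P(y_i | y^{i-1}, x^{i-1})`. -/
def causalCond (p : (Fin n → X) → ℝ) (r : (Fin n → X) → (Fin n → Y) → ℝ)
    (x : Fin n → X) (y : Fin n → Y) : ℝ :=
  ∏ i : Fin n,
    ((∑ x' : Fin n → X, ∑ y' : Fin n → Y,
        if (∀ j, j < i → x' j = x j) ∧ (∀ j, j ≤ i → y' j = y j)
        then p x' * r x' y' else 0) /
      (∑ x' : Fin n → X, ∑ y' : Fin n → Y,
        if (∀ j, j < i → x' j = x j) ∧ (∀ j, j < i → y' j = y j)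
        then p x' * r x' y' else 0))

/-- Directed information `I(X̂ⁿ → Xⁿ)` computed from source pmf `p` and conditional pmf `r`. -/
def directedInfo (p : (Fin n → X) → ℝ) (r : (Fin n → X) → (Fin n → Y) → ℝ) : ℝ :=
  ∑ x, ∑ y, p x * r x y * Real.logb 2 (r x y / causalCond p r x y)

/-- The `n`-th order rate distortion function with feed-forward. -/
def Rn (n : ℕ) (p : (Fin n → X) → ℝ) (d : (Fin n → X) → (Fin n → Y) → ℝ) (D : ℝ) : ℝ :=
  (1 / (n : ℝ)) *
    sInf {v | ∃ r : (Fin n → X) → (Fin n → Y) → ℝ, IsCondPMF r ∧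
      (∑ x, ∑ y, p x * r x y * d x y) ≤ D ∧ v = directedInfo p r}

/-- Left shift on sequences. -/
def shift (X : Type) : (ℕ → X) → (ℕ → X) := fun ω k => ω (k + 1)

/-- The law of the first `n` coordinates under `μ`. -/
def lawFin [MeasurableSpace X] (μ : MeasureTheory.Measure (ℕ → X)) (n : ℕ)
    (x : Fin n → X) : ℝ :=
  (μ {ω | ∀ i : Fin n, ω (i : ℕ) = x i}).toReal

/-- Per-letter distortion extended to blocks of length `L`. -/
def dBlock (d0 : X → Y → ℝ) (L : ℕ) (x : Fin L → X) (y : Fin L → Y) : ℝ :=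
  (1 / (L : ℝ)) * ∑ i, d0 (x i) (y i)

end FFRD

namespace FFRD

/-- `q` is a causal conditioning pmf `q(x̂ⁿ‖x^{n−1}) = ∏ᵢ qᵢ(x̂ᵢ | x̂^{i−1}, x^{i−1})`,
where each factor is a pmf on `Y` depending only on the strict pasts of `x` and `y`. -/
def IsCausalCondKernel {X Y : Type} [Fintype X] [Fintype Y] {n : ℕ}
    (q : (Fin n → X) → (Fin n → Y) → ℝ) : Prop :=
  ∃ qi : Fin n → (Fin n → X) → (Fin n → Y) → Y → ℝ,
    (∀ i x y, (∀ b, 0 ≤ qi i x y b) ∧ ∑ b, qi i x y b = 1) ∧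
    (∀ i x x' y y', (∀ j, j < i → x j = x' j) → (∀ j, j < i → y j = y' j) →
      qi i x y = qi i x' y') ∧
    (∀ x y, q x y = ∏ i, qi i x y (y i))

/-- `I_FF(r, q) = Σ_{xⁿ,x̂ⁿ} p(xⁿ) r(x̂ⁿ|xⁿ) log₂ ( r(x̂ⁿ|xⁿ) / q(x̂ⁿ‖x^{n−1}) )`. -/
def IFF {X Y : Type} [Fintype X] [Fintype Y] {n : ℕ} (p : (Fin n → X) → ℝ)
    (r q : (Fin n → X) → (Fin n → Y) → ℝ) : ℝ :=
  ∑ x, ∑ y, p x * r x y * Real.logb 2 (r x y / q x y)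

end FFRD

namespace BAaux

lemma prod_le_one {Z : Type} [Fintype Z] [DecidableEq Z] : ∀ (n : ℕ)
    (g : Fin n → (Fin n → Z) → ℝ) (_ : ∀ i z, 0 ≤ g i z)
    (_ : ∀ i z z', (∀ j, j ≤ i → z j = z' j) → g i z = g i z')
    (_ : ∀ i z, ∑ c, g i (Function.update z i c) ≤ 1),
    ∑ z, ∏ i, g i z ≤ 1 := by
  intro n
  induction n with
  | zero => intro g _ _ _; simp
  | succ n ih =>
    intro g h0 hdep hsum
    rcases isEmpty_or_nonempty Z with hZ | ⟨⟨z0⟩⟩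
    · simp
    · rw [← (Fin.consEquiv (fun _ : Fin (n+1) => Z)).sum_comp, Fintype.sum_prod_type]
      have key : ∀ c : Z, ∑ z : Fin n → Z,
          ∏ i, g i ((Fin.consEquiv (fun _ : Fin (n+1) => Z)) (c, z))
          ≤ g 0 (Function.update (fun _ => z0) 0 c) := by
        intro c
        have h1 : ∀ z : Fin n → Z,
            ∏ i, g i ((Fin.consEquiv (fun _ : Fin (n+1) => Z)) (c, z))
            = g 0 (Function.update (fun _ => z0) 0 c) *
              ∏ i : Fin n, g i.succ (Fin.cons c z) := by
          intro z
          rw [Fin.prod_univ_succ]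
          congr 1
          apply hdep
          intro j hj
          have : j = 0 := by simpa using hj
          subst this
          simp [Fin.consEquiv]
        simp_rw [h1]
        rw [← Finset.mul_sum]
        apply mul_le_of_le_one_right (h0 _ _)
        apply ih (fun i z => g i.succ (Fin.cons c z))
        · intro i z; exact h0 _ _
        · intro i z z' h
          apply hdep
          intro j hj
          induction j using Fin.cases with
          | zero => simp
          | succ j => simpa using h j (by simpa using hj)
        · intro i z
          have := hsum i.succ (Fin.cons c z)
          simpa [Fin.cons_update] using this
      exact (Finset.sum_le_sum fun c _ => key c).trans (hsum 0 _)

variable {X Y : Type} [Fintype X] [DecidableEq X] [Fintype Y] [DecidableEq Y] {n : ℕ}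

lemma prod_le_one2 (a b : Fin n → (Fin n → X) → (Fin n → Y) → ℝ)
    (ha : ∀ i x y, 0 ≤ a i x y) (hb : ∀ i x y, 0 ≤ b i x y)
    (hda : ∀ i x x' y y', (∀ j, j < i → x j = x' j) → (∀ j, j ≤ i → y j = y' j) →
      a i x y = a i x' y')
    (hdb : ∀ i x x' y y', (∀ j, j ≤ i → x j = x' j) → (∀ j, j ≤ i → y j = y' j) →
      b i x y = b i x' y')
    (hsa : ∀ i x y, ∑ c, a i x (Function.update y i c) ≤ 1)
    (hsb : ∀ i x y, ∑ c, b i (Function.update x i c) y ≤ 1) :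
    ∑ x, ∑ y, (∏ i, a i x y) * (∏ i, b i x y) ≤ 1 := by
  have h := prod_le_one (Z := X × Y) n
    (fun i z => a i (fun j => (z j).1) (fun j => (z j).2) *
      b i (fun j => (z j).1) (fun j => (z j).2))
    (fun i z => mul_nonneg (ha _ _ _) (hb _ _ _))
    (by
      intro i z z' h
      rw [hda i _ (fun j => (z' j).1) _ (fun j => (z' j).2),
        hdb i _ (fun j => (z' j).1) _ (fun j => (z' j).2)]
      · intro j hj; rw [h j hj]
      · intro j hj; rw [h j hj]
      · intro j hj; rw [h j hj.le]
      · intro j hj; rw [h j hj])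
    (by
      intro i z
      have e1 : ∀ c : X × Y, (fun j => (Function.update z i c j).1)
          = Function.update (fun j => (z j).1) i c.1 := by
        intro c; ext j; by_cases hj : j = i
        · subst hj; simp
        · simp [hj]
      have e2 : ∀ c : X × Y, (fun j => (Function.update z i c j).2)
          = Function.update (fun j => (z j).2) i c.2 := by
        intro c; ext j; by_cases hj : j = i
        · subst hj; simp
        · simp [hj]
      simp_rw [e1, e2]
      rw [Fintype.sum_prod_type, Finset.sum_comm]
      refine le_trans (Finset.sum_le_sum (g := fun c => a i (fun j => (z j).1)
        (Function.update (fun j => (z j).2) i c)) ?_) (hsa i _ _)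
      intro c _
      have : ∀ c' : X, a i (Function.update (fun j => (z j).1) i c')
          (Function.update (fun j => (z j).2) i c) = a i (fun j => (z j).1)
            (Function.update (fun j => (z j).2) i c) := by
        intro c'
        apply hda
        · intro j hj; simp [hj.ne]
        · intro j hj; rfl
      simp_rw [this]
      rw [← Finset.mul_sum]
      exact mul_le_of_le_one_right (ha _ _ _) (hsb _ _ _))
  rw [← (Equiv.arrowProdEquivProdArrow (Fin n) (fun _ => X) (fun _ => Y)).symm.sum_comp,
    Fintype.sum_prod_type] at h
  simpa [Finset.prod_mul_distrib, Equiv.arrowProdEquivProdArrow] using h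

/-- Generic marginal. -/
def M (P : (Fin n → X) → (Fin n → Y) → ℝ) (a b : ℕ) (x : Fin n → X) (y : Fin n → Y) : ℝ :=
  ∑ x', ∑ y', if (∀ j : Fin n, (j : ℕ) < a → x' j = x j) ∧
    (∀ j : Fin n, (j : ℕ) < b → y' j = y j) then P x' y' else 0

lemma M_nonneg {P : (Fin n → X) → (Fin n → Y) → ℝ} (hP : ∀ x y, 0 ≤ P x y) (a b x y) :
    0 ≤ M P a b x y :=
  Finset.sum_nonneg fun x' _ => Finset.sum_nonneg fun y' _ => by split_ifs <;> simp [hP]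

lemma le_M {P : (Fin n → X) → (Fin n → Y) → ℝ} (hP : ∀ x y, 0 ≤ P x y) (a b x y) :
    P x y ≤ M P a b x y := by
  have h1 : ∀ x' y', 0 ≤ if (∀ j : Fin n, (j : ℕ) < a → x' j = x j) ∧
    (∀ j : Fin n, (j : ℕ) < b → y' j = y j) then P x' y' else 0 := by
    intro x' y'; split_ifs <;> simp [hP]
  refine le_trans ?_ (Finset.single_le_sum (fun x' _ => Finset.sum_nonneg fun y' _ => h1 x' y')
    (Finset.mem_univ x))
  refine le_trans ?_ (Finset.single_le_sum (fun y' _ => h1 x y') (Finset.mem_univ y))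
  simp

lemma M_congr (P : (Fin n → X) → (Fin n → Y) → ℝ) (a b : ℕ) {x x' : Fin n → X} {y y' : Fin n → Y}
    (hx : ∀ j : Fin n, (j : ℕ) < a → x j = x' j) (hy : ∀ j : Fin n, (j : ℕ) < b → y j = y' j) :
    M P a b x y = M P a b x' y' := by
  unfold M
  refine Finset.sum_congr rfl fun u _ => Finset.sum_congr rfl fun v _ => ?_
  have : ((∀ j : Fin n, (j : ℕ) < a → u j = x j) ∧ (∀ j : Fin n, (j : ℕ) < b → v j = y j)) ↔
    ((∀ j : Fin n, (j : ℕ) < a → u j = x' j) ∧ (∀ j : Fin n, (j : ℕ) < b → v j = y' j)) := by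
    constructor
    · rintro ⟨h1, h2⟩
      exact ⟨fun j hj => (h1 j hj).trans (hx j hj), fun j hj => (h2 j hj).trans (hy j hj)⟩
    · rintro ⟨h1, h2⟩
      exact ⟨fun j hj => (h1 j hj).trans (hx j hj).symm,
        fun j hj => (h2 j hj).trans (hy j hj).symm⟩
  simp only [this]

lemma upd_iff {Z : Type} [DecidableEq Z] (i : Fin n) (u z : Fin n → Z) (c : Z) :
    (∀ j : Fin n, (j : ℕ) < i + 1 → u j = Function.update z i c j) ↔
      (c = u i ∧ ∀ j : Fin n, (j : ℕ) < i → u j = z j) := by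
  constructor
  · intro h
    refine ⟨by simpa using (h i (by simp)).symm, fun j hj => ?_⟩
    have hne : j ≠ i := by rintro rfl; exact lt_irrefl _ hj
    simpa [hne] using h j (by omega)
  · rintro ⟨h1, h2⟩ j hj
    by_cases hji : j = i
    · subst hji; simp [h1]
    · have : (j : ℕ) ≠ i := fun h => hji (Fin.ext h)
      simpa [hji] using h2 j (by omega)

lemma M_sum_y (P : (Fin n → X) → (Fin n → Y) → ℝ) (a : ℕ) (i : Fin n) (x y) :
    ∑ c, M P a (i + 1) x (Function.update y i c) = M P a i x y := by
  unfold M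
  rw [Finset.sum_comm]
  refine Finset.sum_congr rfl fun u _ => ?_
  rw [Finset.sum_comm]
  refine Finset.sum_congr rfl fun v _ => ?_
  simp_rw [upd_iff]
  rw [Finset.sum_eq_single (v i)]
  · simp
  · intro b _ hb; simp [hb]
  · simp

lemma M_sum_x (P : (Fin n → X) → (Fin n → Y) → ℝ) (b : ℕ) (i : Fin n) (x y) :
    ∑ c, M P (i + 1) b (Function.update x i c) y = M P i b x y := by
  unfold M
  rw [Finset.sum_comm]
  refine Finset.sum_congr rfl fun u _ => ?_
  rw [Finset.sum_comm]
  refine Finset.sum_congr rfl fun v _ => ?_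
  simp_rw [upd_iff]
  rw [Finset.sum_eq_single (u i)]
  · simp
  · intro b _ hb; simp [hb]
  · simp

lemma causalCond_eq (p : (Fin n → X) → ℝ) (r : (Fin n → X) → (Fin n → Y) → ℝ) (x y) :
    FFRD.causalCond p r x y = ∏ i : Fin n, (M (fun x y => p x * r x y) i (i + 1) x y /
      M (fun x y => p x * r x y) i i x y) := by
  simp only [FFRD.causalCond, M, Fin.lt_def, Fin.le_def, Nat.lt_succ_iff]

def rev (P : (Fin n → X) → (Fin n → Y) → ℝ) (x : Fin n → X) (y : Fin n → Y) : ℝ :=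
  ∏ i : Fin n, (M P (i + 1) (i + 1) x y / M P i (i + 1) x y)

lemma M_top (P : (Fin n → X) → (Fin n → Y) → ℝ) (x y) : M P n n x y = P x y := by
  unfold M
  rw [Finset.sum_eq_single x, Finset.sum_eq_single y]
  · simp
  · intro b _ hb
    rw [if_neg]
    rintro ⟨_, h⟩
    exact hb (funext fun j => h j j.2)
  · simp
  · intro b _ hb
    apply Finset.sum_eq_zero
    intro v _
    rw [if_neg]
    rintro ⟨h, _⟩
    exact hb (funext fun j => h j j.2)
  · simp

lemma mul_rev {p : (Fin n → X) → ℝ} {r : (Fin n → X) → (Fin n → Y) → ℝ}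
    (hP : ∀ x y, 0 ≤ p x * r x y) (h1 : ∑ x, ∑ y, p x * r x y = 1) {x y}
    (hxy : 0 < p x * r x y) :
    0 < FFRD.causalCond p r x y ∧ 0 < rev (fun x y => p x * r x y) x y ∧
    FFRD.causalCond p r x y * rev (fun x y => p x * r x y) x y = p x * r x y := by
  have hM : ∀ a b, 0 < M (fun x y => p x * r x y) a b x y := fun a b =>
    lt_of_lt_of_le hxy (le_M (P := fun x y => p x * r x y) hP a b x y)
  refine ⟨?_, ?_, ?_⟩
  · rw [causalCond_eq]; exact Finset.prod_pos fun i _ => div_pos (hM _ _) (hM _ _)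
  · exact Finset.prod_pos fun i _ => div_pos (hM _ _) (hM _ _)
  · rw [causalCond_eq, rev, ← Finset.prod_mul_distrib]
    have : ∀ i : Fin n, M (fun x y => p x * r x y) i (i + 1) x y /
      M (fun x y => p x * r x y) i i x y * (M (fun x y => p x * r x y) (i + 1) (i + 1) x y /
      M (fun x y => p x * r x y) i (i + 1) x y) =
      M (fun x y => p x * r x y) (i + 1) (i + 1) x y / M (fun x y => p x * r x y) i i x y := by
      intro i
      have := (hM i (i+1)).ne'
      have := (hM i i).ne'
      field_simp
    simp_rw [this]
    rw [Fin.prod_univ_eq_prod_range (fun i => M (fun x y => p x * r x y) (i + 1) (i + 1) x y /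
      M (fun x y => p x * r x y) i i x y) n]
    have h2 : ∀ m, ∏ i ∈ Finset.range m, (M (fun x y => p x * r x y) (i + 1) (i + 1) x y /
      M (fun x y => p x * r x y) i i x y) = M (fun x y => p x * r x y) m m x y := by
      intro m
      induction m with
      | zero => simp [M, h1]
      | succ m ih =>
        rw [Finset.prod_range_succ, ih]
        have := (hM m m).ne'
        field_simp
    rw [h2, M_top]

/-- sub-stochastic causal kernels -/
def IsK (q : (Fin n → X) → (Fin n → Y) → ℝ) : Prop :=
  ∃ a : Fin n → (Fin n → X) → (Fin n → Y) → ℝ,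
    (∀ i x y, 0 ≤ a i x y) ∧
    (∀ i x x' y y', (∀ j, j < i → x j = x' j) → (∀ j, j ≤ i → y j = y' j) →
      a i x y = a i x' y') ∧
    (∀ i x y, ∑ c, a i x (Function.update y i c) ≤ 1) ∧ ∀ x y, q x y = ∏ i, a i x y

lemma IsK.le_one {q : (Fin n → X) → (Fin n → Y) → ℝ} (h : IsK q) (x y) : q x y ≤ 1 := by
  obtain ⟨a, h0, _, hs, he⟩ := h
  rw [he]
  refine Finset.prod_le_one (fun i _ => h0 _ _ _) fun i _ => ?_
  refine le_trans ?_ (hs i x y)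
  refine le_trans ?_ (Finset.single_le_sum (fun c _ => h0 i x _) (Finset.mem_univ (y i)))
  simp

lemma IsK_causal {p : (Fin n → X) → ℝ} {r : (Fin n → X) → (Fin n → Y) → ℝ}
    (hP : ∀ x y, 0 ≤ p x * r x y) : IsK (FFRD.causalCond p r) := by
  have hM := M_nonneg (P := fun x y => p x * r x y) hP
  refine ⟨fun i x y => M (fun x y => p x * r x y) i (i + 1) x y /
      M (fun x y => p x * r x y) i i x y, fun i x y => div_nonneg (hM _ _ _ _) (hM _ _ _ _),
      ?_, ?_, causalCond_eq p r⟩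
  · intro i x x' y y' hx hy
    dsimp only
    rw [M_congr _ _ _ (x' := x') (y' := y'), M_congr _ i i (x' := x') (y' := y')]
    · exact hx
    · exact fun j hj => hy j (le_of_lt hj)
    · exact hx
    · exact fun j hj => hy j (Nat.lt_succ_iff.1 hj)
  · intro i x y
    have : ∀ c, M (fun x y => p x * r x y) i i x (Function.update y i c) =
        M (fun x y => p x * r x y) i i x y := fun c => M_congr _ _ _ (fun _ _ => rfl)
          (fun j hj => by
            have : j ≠ i := by rintro rfl; exact lt_irrefl _ hj
            simp [this])
    simp_rw [this]
    rw [← Finset.sum_div, M_sum_y]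
    exact div_self_le_one _

lemma IsK_mul_rev {q : (Fin n → X) → (Fin n → Y) → ℝ} (hq : IsK q)
    {P : (Fin n → X) → (Fin n → Y) → ℝ} (hP : ∀ x y, 0 ≤ P x y) :
    ∑ x, ∑ y, q x y * rev P x y ≤ 1 := by
  obtain ⟨a, h0, hd, hs, he⟩ := hq
  have hM := M_nonneg (P := P) hP
  simp_rw [he, rev]
  apply prod_le_one2 a _ h0 _ hd _ hs
  · intro i x y
    have : ∀ c, M P i (i + 1) (Function.update x i c) y =
        M P i (i + 1) x y := fun c => M_congr _ _ _ (fun j hj => by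
            have : j ≠ i := by rintro rfl; exact lt_irrefl _ hj
            simp [this]) (fun _ _ => rfl)
    simp_rw [this]
    rw [← Finset.sum_div, M_sum_x]
    exact div_self_le_one _
  · intro i x y
    exact div_nonneg (hM _ _ _ _) (hM _ _ _ _)
  · intro i x x' y y' hx hy
    rw [M_congr _ _ _ (x' := x') (y' := y'), M_congr _ i _ (x' := x') (y' := y')]
    · exact fun j hj => hx j (le_of_lt hj)
    · exact fun j hj => hy j (Nat.lt_succ_iff.1 hj)
    · exact fun j hj => hx j (Nat.lt_succ_iff.1 hj)
    · exact fun j hj => hy j (Nat.lt_succ_iff.1 hj)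

lemma gibbs {P s t s' : (Fin n → X) → (Fin n → Y) → ℝ} (hP : ∀ x y, 0 ≤ P x y)
    (ht : ∀ x y, 0 ≤ t x y) (hs' : ∀ x y, 0 < s' x y)
    (h : ∀ x y, 0 < P x y → 0 < s x y ∧ s x y * t x y = P x y) :
    ((∑ x, ∑ y, P x y) - ∑ x, ∑ y, s' x y * t x y) / Real.log 2 ≤
      ∑ x, ∑ y, P x y * Real.logb 2 (s x y / s' x y) := by
  have h2 : 0 < Real.log 2 := Real.log_pos (by norm_num)
  rw [div_le_iff₀ h2, Finset.sum_mul, ← Finset.sum_sub_distrib]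
  refine Finset.sum_le_sum fun x _ => ?_
  rw [Finset.sum_mul, ← Finset.sum_sub_distrib]
  refine Finset.sum_le_sum fun y _ => ?_
  rw [mul_assoc, Real.logb, div_mul_cancel₀ _ h2.ne']
  rcases (hP x y).eq_or_lt with h0 | h0
  · rw [← h0]
    have := mul_nonneg (hs' x y).le (ht x y)
    linarith
  · obtain ⟨a, b⟩ := h x y h0
    have h3 := Real.one_sub_inv_le_log_of_pos (div_pos a (hs' x y))
    have h4 := mul_le_mul_of_nonneg_left h3 h0.le
    refine le_trans (le_of_eq ?_) h4
    rw [← b]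
    have := a.ne'
    have := (hs' x y).ne'
    field_simp

lemma tele {H : ℕ → ℝ} (hH : Antitone H) (hb : BddBelow (Set.range H)) (S : Set ℝ)
    (hmem : ∀ k, H k ∈ S)
    (hS : ∀ v ∈ S, ∃ A : ℕ → ℝ, (∀ k, 0 ≤ A k) ∧ ∀ k, H k - v ≤ A k - A (k + 1)) :
    Tendsto H atTop (nhds (sInf S)) := by
  have ht := tendsto_atTop_ciInf hH hb
  have : IsGLB S (⨅ k, H k) := by
    constructor
    · intro v hv
      by_contra hlt
      push Not at hlt
      obtain ⟨A, hA, hd⟩ := hS v hv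
      have h1 : ∀ k : ℕ, A k ≤ A 0 - k * ((⨅ k, H k) - v) := by
        intro k
        induction k with
        | zero => simp
        | succ k ih =>
          have := hd k
          have := ciInf_le hb k
          push_cast
          linarith
      obtain ⟨m, hm⟩ := exists_lt_nsmul (sub_pos.2 hlt) (A 0)
      rw [nsmul_eq_mul] at hm
      have := h1 m
      have := hA m
      linarith
    · intro w hw
      exact le_ciInf fun k => hw (hmem k)
  rwa [this.csInf_eq ⟨_, hmem 0⟩]

end BAaux

open FFRD in
/-- Theorem 4: the Blahut–Arimoto-type iteration started from the uniform
causal conditioning pmf converges: `K(r^k,q^k)` tends to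
`min_r [ I(X̂ⁿ→Xⁿ) + λ·E_r[d] ]`. -/
theorem BA_iteration_converges
    {X Y : Type} [Fintype X] [DecidableEq X] [Fintype Y] [Nonempty Y] [DecidableEq Y]
    (n : ℕ)
    (p : (Fin n → X) → ℝ) (hp : IsPMF p) (hppos : ∀ x, 0 < p x)
    (lam : ℝ) (hlam : 0 ≤ lam)
    (d : (Fin n → X) → (Fin n → Y) → ℝ) (hd : ∀ x y, 0 ≤ d x y)
    (r : ℕ → (Fin n → X) → (Fin n → Y) → ℝ)
    (q : ℕ → (Fin n → X) → (Fin n → Y) → ℝ)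
    (hq0 : ∀ x y, q 0 x y = (1 / (Fintype.card Y : ℝ)) ^ n)
    (hr : ∀ k, 1 ≤ k → ∀ x y, r k x y =
      q (k - 1) x y * 2 ^ (-(lam * d x y)) /
        ∑ y', q (k - 1) x y' * 2 ^ (-(lam * d x y')))
    (hqk : ∀ k, 1 ≤ k → q k = causalCond p (r k)) :
    Filter.Tendsto
      (fun k => IFF p (r k) (q k) + lam * (∑ x, ∑ y, p x * r k x y * d x y))
      Filter.atTop
      (nhds (sInf {v : ℝ | ∃ r' : (Fin n → X) → (Fin n → Y) → ℝ, IsCondPMF r' ∧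
        v = directedInfo p r' + lam * ∑ x, ∑ y, p x * r' x y * d x y})) := by
  classical
  obtain ⟨hp0, hp1⟩ := hp
  have hw : ∀ x y, (0 : ℝ) < 2 ^ (-(lam * d x y)) := fun x y =>
    Real.rpow_pos_of_pos (by norm_num) _
  have hcard : (0 : ℝ) < Fintype.card Y := by exact_mod_cast Fintype.card_pos
  -- normalisation
  set Z : ℕ → (Fin n → X) → ℝ := fun k x => ∑ y', q k x y' * 2 ^ (-(lam * d x y')) with hZ
  have hr' : ∀ k x y, r (k + 1) x y = q k x y * 2 ^ (-(lam * d x y)) / Z k x := by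
    intro k x y
    simpa using hr (k + 1) (by omega) x y
  have hZpos : ∀ k, (∀ x y, 0 < q k x y) → ∀ x, 0 < Z k x := fun k h x =>
    Finset.sum_pos (fun y _ => mul_pos (h x y) (hw x y)) Finset.univ_nonempty
  have hrC : ∀ k, (∀ x y, 0 < q k x y) →
      (∀ x y, 0 < r (k + 1) x y) ∧ ∀ x, ∑ y, r (k + 1) x y = 1 := by
    intro k h
    refine ⟨fun x y => ?_, fun x => ?_⟩
    · rw [hr']; exact div_pos (mul_pos (h x y) (hw x y)) (hZpos k h x)
    · simp_rw [hr']
      rw [← Finset.sum_div]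
      exact div_self (hZpos k h x).ne'
  have hjoint : ∀ r' : (Fin n → X) → (Fin n → Y) → ℝ, (∀ x, ∑ y, r' x y = 1) →
      ∑ x, ∑ y, p x * r' x y = 1 := by
    intro r' h
    simp_rw [← Finset.mul_sum, h, mul_one, hp1]
  have hqpos : ∀ k, ∀ x y, 0 < q k x y := by
    intro k
    induction k with
    | zero => intro x y; rw [hq0]; positivity
    | succ k ih =>
      intro x y
      obtain ⟨h1, h2⟩ := hrC k ih
      rw [hqk (k + 1) (by omega)]
      exact (BAaux.mul_rev (fun x y => mul_nonneg (hp0 x) (h1 x y).le) (hjoint _ h2)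
        (mul_pos (hppos x) (h1 x y))).1
  have hrpos : ∀ k x y, 0 < r (k + 1) x y := fun k => (hrC k (hqpos k)).1
  have hrsum : ∀ k x, ∑ y, r (k + 1) x y = 1 := fun k => (hrC k (hqpos k)).2
  have hqK : ∀ k, BAaux.IsK (q k) := by
    intro k
    cases k with
    | zero =>
      refine ⟨fun _ _ _ => 1 / (Fintype.card Y : ℝ), fun _ _ _ => by positivity,
        fun _ _ _ _ _ _ _ => rfl, fun _ _ _ => ?_, fun x y => ?_⟩
      · simp [hcard.ne']
      · simp [hq0]
    | succ k =>
      rw [hqk (k + 1) (by omega)]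
      exact BAaux.IsK_causal fun x y => mul_nonneg (hp0 x) (hrpos k x y).le
  have h2 : 0 < Real.log 2 := Real.log_pos (by norm_num)
  have hlogZ : ∀ k x y, Real.logb 2 (Z k x) =
      Real.logb 2 (q k x y) - lam * d x y - Real.logb 2 (r (k + 1) x y) := by
    intro k x y
    rw [hr', Real.logb_div (mul_pos (hqpos k x y) (hw x y)).ne' (hZpos k (hqpos k) x).ne',
      Real.logb_mul (hqpos k x y).ne' (hw x y).ne', Real.logb_rpow (by norm_num) (by norm_num)]
    ring
  -- the intermediate value
  set B : ℕ → ℝ := fun k => -∑ x, p x * Real.logb 2 (Z k x) with hB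
  have hBeq : ∀ k (r' : (Fin n → X) → (Fin n → Y) → ℝ), (∀ x, ∑ y, r' x y = 1) →
      B k = ∑ x, ∑ y, p x * r' x y *
        (Real.logb 2 (r (k + 1) x y) - Real.logb 2 (q k x y) + lam * d x y) := by
    intro k r' h
    rw [hB]
    dsimp only
    rw [← Finset.sum_neg_distrib]
    refine Finset.sum_congr rfl fun x _ => ?_
    have : ∀ y, p x * r' x y *
        (Real.logb 2 (r (k + 1) x y) - Real.logb 2 (q k x y) + lam * d x y) =
        r' x y * -(p x * Real.logb 2 (Z k x)) := by
      intro y; rw [hlogZ k x y]; ring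
    simp_rw [this]
    rw [← Finset.sum_mul, h, one_mul]
  have hF : ∀ r' q' : (Fin n → X) → (Fin n → Y) → ℝ,
      IFF p r' q' + lam * (∑ x, ∑ y, p x * r' x y * d x y) =
      ∑ x, ∑ y, p x * r' x y * (Real.logb 2 (r' x y / q' x y) + lam * d x y) := by
    intro r' q'
    simp only [IFF, Finset.mul_sum, ← Finset.sum_add_distrib]
    refine Finset.sum_congr rfl fun x _ => Finset.sum_congr rfl fun y _ => ?_
    ring
  have hA0 : ∀ k (r' : (Fin n → X) → (Fin n → Y) → ℝ), IsCondPMF r' →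
      0 ≤ ∑ x, ∑ y, p x * r' x y * Real.logb 2 (causalCond p r' x y / q k x y) := by
    intro k r' ⟨h0, h1⟩
    have hP : ∀ x y, 0 ≤ p x * r' x y := fun x y => mul_nonneg (hp0 x) (h0 x y)
    refine le_trans ?_ (BAaux.gibbs (P := fun x y => p x * r' x y) (s := causalCond p r')
      (t := BAaux.rev fun x y => p x * r' x y) (s' := q k) hP
      (fun x y => Finset.prod_nonneg fun i _ => div_nonneg (BAaux.M_nonneg hP _ _ _ _)
        (BAaux.M_nonneg hP _ _ _ _)) (hqpos k) ?_)
    · have := BAaux.IsK_mul_rev (hqK k) hP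
      rw [hjoint r' h1]
      exact div_nonneg (by linarith) h2.le
    · intro x y hxy
      obtain ⟨a, _, c⟩ := BAaux.mul_rev hP (hjoint r' h1) hxy
      exact ⟨a, c⟩
  have hGB : ∀ k, IFF p (r (k + 1)) (q (k + 1)) +
      lam * (∑ x, ∑ y, p x * r (k + 1) x y * d x y) ≤ B k := by
    intro k
    have h := hA0 k (r (k + 1)) ⟨fun x y => (hrpos k x y).le, hrsum k⟩
    rw [hF, hBeq k _ (hrsum k), ← sub_nonneg, ← Finset.sum_sub_distrib]
    refine le_of_le_of_eq h (Finset.sum_congr rfl fun x _ => ?_)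
    rw [← Finset.sum_sub_distrib]
    refine Finset.sum_congr rfl fun y _ => ?_
    rw [← hqk (k + 1) (by omega), Real.logb_div (hqpos _ x y).ne' (hqpos _ x y).ne',
      Real.logb_div (hrpos _ x y).ne' (hqpos _ x y).ne']
    ring
  have hBG : ∀ k, B (k + 1) ≤ IFF p (r (k + 1)) (q (k + 1)) +
      lam * (∑ x, ∑ y, p x * r (k + 1) x y * d x y) := by
    intro k
    have h := BAaux.gibbs (P := fun x y => p x * r (k + 1) x y)
      (s := fun x y => p x * r (k + 1) x y) (t := fun _ _ => 1)
      (s' := fun x y => p x * r (k + 2) x y)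
      (fun x y => (mul_pos (hppos x) (hrpos k x y)).le) (fun _ _ => zero_le_one)
      (fun x y => mul_pos (hppos x) (hrpos (k + 1) x y)) (fun x y h => ⟨h, mul_one _⟩)
    simp only [mul_one] at h
    rw [hjoint _ (hrsum k), hjoint _ (hrsum (k + 1)), sub_self, zero_div] at h
    rw [hF, hBeq (k + 1) _ (hrsum k), ← sub_nonneg, ← Finset.sum_sub_distrib]
    refine le_of_le_of_eq h (Finset.sum_congr rfl fun x _ => ?_)
    rw [← Finset.sum_sub_distrib]
    refine Finset.sum_congr rfl fun y _ => ?_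
    rw [mul_div_mul_left _ _ (hppos x).ne',
      Real.logb_div (hrpos _ x y).ne' (hrpos (k + 1) x y).ne',
      Real.logb_div (hrpos _ x y).ne' (hqpos _ x y).ne']
    ring
  rw [← tendsto_add_atTop_iff_nat 1]
  apply BAaux.tele
  · exact antitone_nat_of_succ_le fun k => (hGB (k + 1)).trans (hBG k)
  · refine ⟨(1 - ∑ x : Fin n → X, ∑ _y : Fin n → Y, p x) / Real.log 2, ?_⟩
    rintro _ ⟨k, rfl⟩
    have h := BAaux.gibbs (P := fun x y => p x * r (k + 1) x y)
      (s := fun x y => p x * r (k + 1) x y) (t := fun _ _ => 1)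
      (s' := fun x y => p x * q (k + 1) x y)
      (fun x y => (mul_pos (hppos x) (hrpos k x y)).le) (fun _ _ => zero_le_one)
      (fun x y => mul_pos (hppos x) (hqpos (k + 1) x y)) (fun x y h => ⟨h, mul_one _⟩)
    rw [hjoint _ (hrsum k)] at h
    have h3 : ∑ x, ∑ y, p x * q (k + 1) x y * 1 ≤ ∑ x : Fin n → X, ∑ _y : Fin n → Y, p x :=
      Finset.sum_le_sum fun x _ => Finset.sum_le_sum fun y _ => by
        rw [mul_one]; exact mul_le_of_le_one_right (hp0 x) ((hqK (k + 1)).le_one x y)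
    have h4 : ∑ x, ∑ y, p x * r (k + 1) x y *
        Real.logb 2 (p x * r (k + 1) x y / (p x * q (k + 1) x y)) =
        IFF p (r (k + 1)) (q (k + 1)) :=
      Finset.sum_congr rfl fun x _ => Finset.sum_congr rfl fun y _ => by
        rw [mul_div_mul_left _ _ (hppos x).ne']
    rw [h4] at h
    have h5 : 0 ≤ lam * (∑ x, ∑ y, p x * r (k + 1) x y * d x y) :=
      mul_nonneg hlam (Finset.sum_nonneg fun x _ => Finset.sum_nonneg fun y _ =>
        mul_nonneg (mul_pos (hppos x) (hrpos k x y)).le (hd x y))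
    have h6 : (1 - ∑ x : Fin n → X, ∑ _y : Fin n → Y, p x) / Real.log 2 ≤
      (1 - ∑ x, ∑ y, p x * q (k + 1) x y * 1) / Real.log 2 :=
      div_le_div_of_nonneg_right (by linarith) h2.le
    dsimp only
    linarith
  · intro k
    refine ⟨r (k + 1), ⟨fun x y => (hrpos k x y).le, hrsum k⟩, ?_⟩
    rw [hqk (k + 1) (by omega)]
    rfl
  · rintro v ⟨r', hr'', rfl⟩
    refine ⟨fun k => ∑ x, ∑ y, p x * r' x y * Real.logb 2 (causalCond p r' x y / q k x y),
      fun k => hA0 k r' hr'', fun k => ?_⟩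
    refine le_trans (sub_le_sub_right (hGB k) _) ?_
    obtain ⟨h0, h1⟩ := hr''
    have hP : ∀ x y, 0 ≤ p x * r' x y := fun x y => mul_nonneg (hp0 x) (h0 x y)
    have hPk : ∀ x y, 0 < p x * r (k + 1) x y := fun x y => mul_pos (hppos x) (hrpos k x y)
    have hmk := fun x y => BAaux.mul_rev (fun x y => (hPk x y).le) (hjoint _ (hrsum k)) (hPk x y)
    have h := BAaux.gibbs (P := fun x y => p x * r' x y)
      (s := BAaux.rev fun x y => p x * r' x y) (t := causalCond p r')
      (s' := BAaux.rev fun x y => p x * r (k + 1) x y) hP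
      (fun x y => by
        rw [BAaux.causalCond_eq]
        exact Finset.prod_nonneg fun i _ => div_nonneg
          (BAaux.M_nonneg (P := fun x y => p x * r' x y) hP _ _ _ _)
          (BAaux.M_nonneg (P := fun x y => p x * r' x y) hP _ _ _ _))
      (fun x y => (hmk x y).2.1)
      (fun x y hxy => by
        obtain ⟨_, b, c⟩ := BAaux.mul_rev hP (hjoint r' h1) hxy
        exact ⟨b, by rw [mul_comm]; exact c⟩)
    have h3 : 0 ≤ ∑ x, ∑ y, p x * r' x y * Real.logb 2 (BAaux.rev (fun x y => p x * r' x y) x y /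
        BAaux.rev (fun x y => p x * r (k + 1) x y) x y) := by
      refine le_trans ?_ h
      have h4 := BAaux.IsK_mul_rev (BAaux.IsK_causal hP) (P := fun x y => p x * r (k + 1) x y)
        (fun x y => (hPk x y).le)
      simp_rw [mul_comm (causalCond p r' _ _)] at h4
      rw [hjoint r' h1]
      exact div_nonneg (by linarith) h2.le
    have h5 := hF r' (causalCond p r')
    have h6 : directedInfo p r' = IFF p r' (causalCond p r') := rfl
    rw [h6, h5, hBeq k r' h1, ← sub_nonneg]
    simp only [← Finset.sum_sub_distrib]
    refine le_of_le_of_eq h3 (Finset.sum_congr rfl fun x _ => Finset.sum_congr rfl fun y _ => ?_)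
    rcases (hP x y).eq_or_lt with hz | hz
    · rw [← hz]; ring
    · obtain ⟨a, b, c⟩ := BAaux.mul_rev hP (hjoint r' h1) hz
      obtain ⟨a', b', c'⟩ := hmk x y
      have hrp : 0 < r' x y := pos_of_mul_pos_right hz (hp0 x)
      have c1 := congrArg (Real.logb 2) c
      have c2 := congrArg (Real.logb 2) c'
      rw [Real.logb_mul a.ne' b.ne', Real.logb_mul (hppos x).ne' hrp.ne'] at c1
      rw [Real.logb_mul a'.ne' b'.ne', Real.logb_mul (hppos x).ne' (hrpos k x y).ne',
        ← hqk (k + 1) (by omega)] at c2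
      rw [Real.logb_div b.ne' b'.ne', Real.logb_div a.ne' (hqpos k x y).ne',
        Real.logb_div a.ne' (hqpos (k + 1) x y).ne', Real.logb_div hrp.ne' a.ne']
      linear_combination (p x * r' x y) * (c1 - c2)
end
end

section
/- Fix a pmf p on 𝒳ⁿ with p(xⁿ) > 0 for all xⁿ, λ ≥ 0 and a distortion function d: 𝒳ⁿ×𝒳̂ⁿ→[0,∞). In the Blahut–Arimoto-type iteration (from a strictly positive q^{k−1}, set r^k(x̂ⁿ|xⁿ) = q^{k−1}(x̂ⁿ||x^{n−1})2^{−λd(xⁿ,x̂ⁿ)} / Σ_{x̂ⁿ} q^{k−1}(x̂ⁿ||x^{n−1})2^{−λd(xⁿ,x̂ⁿ)}, with q^k induced by p·r^k), define c^k_{x̂ⁿ,x^{n−1}} = q^k(x̂ⁿ||x^{n−1}) / q^{k−1}(x̂ⁿ||x^{n−1}), γ^k(xⁿ) = ( Σ_{x̂ⁿ} q^{k−1}(x̂ⁿ||x^{n−1}) 2^{−λd(xⁿ,x̂ⁿ)} )^{−1}, and D_k = Σ_{xⁿ,x̂ⁿ} p(xⁿ)r^k(x̂ⁿ|xⁿ)d(xⁿ,x̂ⁿ).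 Then (1/n)·( −λD_k + Σ_{xⁿ} p(xⁿ) log₂ γ^k(xⁿ) − log₂ max_{x̂ⁿ,x^{n−1}} c^k_{x̂ⁿ,x^{n−1}} ) ≤ Rₙ(D_k) ≤ (1/n)·( −λD_k + Σ_{xⁿ} p(xⁿ) log₂ γ^k(xⁿ) − Σ_{xⁿ,x̂ⁿ} p(xⁿ)r^k(x̂ⁿ|xⁿ) log₂ c^k_{x̂ⁿ,x^{n−1}} ). -/
open scoped BigOperators
open Filter

noncomputable section

namespace FFRD
section helpers

variable {X Y : Type} [Fintype X] [DecidableEq X] [Fintype Y] [DecidableEq Y] {n : ℕ}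

lemma sum_update_avg {ι Z : Type} [Fintype ι] [DecidableEq ι] [Fintype Z] [DecidableEq Z]
    (k : ι) (F : (ι → Z) → ℝ) :
    ∑ x, ∑ a, F (Function.update x k a) = (Fintype.card Z : ℝ) * ∑ x, F x := by
  have h1 : ∑ x : ι → Z, ∑ a : Z, F (Function.update x k a)
      = ∑ z : (ι → Z) × Z, F (Function.update z.1 k z.2) := by
    rw [Fintype.sum_prod_type]
  have h2 : ∑ z : (ι → Z) × Z, F (Function.update z.1 k z.2)
      = ∑ z : (ι → Z) × Z, F z.1 := by
    have hinv : Function.Involutive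
        (fun z : (ι → Z) × Z => ((Function.update z.1 k z.2, z.1 k) : (ι → Z) × Z)) := by
      rintro ⟨x, a⟩
      simp
    exact Fintype.sum_bijective _ hinv.bijective _ _ (fun z => rfl)
  rw [h1, h2, Fintype.sum_prod_type]
  simp [Finset.mul_sum]

/-- marginal of first k coords -/
def Mg (P : (Fin n → X) → (Fin n → Y) → ℝ) (k : ℕ) (x : Fin n → X) (y : Fin n → Y) : ℝ :=
  ∑ x' : Fin n → X, ∑ y' : Fin n → Y,
    if (∀ j : Fin n, (j : ℕ) < k → x' j = x j) ∧ (∀ j : Fin n, (j : ℕ) < k → y' j = y j)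
        then P x' y' else 0

def Ag (P : (Fin n → X) → (Fin n → Y) → ℝ) (i : Fin n) (x : Fin n → X) (y : Fin n → Y) : ℝ :=
  ∑ x' : Fin n → X, ∑ y' : Fin n → Y,
    if (∀ j, j < i → x' j = x j) ∧ (∀ j, j ≤ i → y' j = y j)
        then P x' y' else 0

lemma causalCond_eq (p : (Fin n → X) → ℝ) (r : (Fin n → X) → (Fin n → Y) → ℝ) (x y) :
    causalCond p r x y = ∏ i : Fin n, (Ag (fun x y => p x * r x y) i x y /
      Mg (fun x y => p x * r x y) i x y) := by
  unfold causalCond Ag Mg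
  simp only [Fin.lt_def]

lemma Mg_full (P : (Fin n → X) → (Fin n → Y) → ℝ) (x y) : Mg P n x y = P x y := by
  unfold Mg
  have : ∀ x' : Fin n → X, ∀ y' : Fin n → Y,
      (if (∀ j : Fin n, (j : ℕ) < n → x' j = x j) ∧ (∀ j : Fin n, (j : ℕ) < n → y' j = y j)
        then P x' y' else 0) = if x' = x then (if y' = y then P x' y' else 0) else 0 := by
    intro x' y'
    rw [← ite_and]
    congr 1
    simp [funext_iff]
  simp only [this]
  simp

lemma Mg_zero (P : (Fin n → X) → (Fin n → Y) → ℝ) (x y) : Mg P 0 x y = ∑ x, ∑ y, P x y := by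
  simp [Mg]

lemma Mg_nonneg (P : (Fin n → X) → (Fin n → Y) → ℝ) (hP : ∀ x y, 0 ≤ P x y) (k x y) :
    0 ≤ Mg P k x y := by
  unfold Mg
  refine Finset.sum_nonneg fun x' _ => Finset.sum_nonneg fun y' _ => ?_
  split_ifs
  · exact hP _ _
  · exact le_rfl

lemma Ag_nonneg (P : (Fin n → X) → (Fin n → Y) → ℝ) (hP : ∀ x y, 0 ≤ P x y) (k x y) :
    0 ≤ Ag P k x y := by
  unfold Ag
  refine Finset.sum_nonneg fun x' _ => Finset.sum_nonneg fun y' _ => ?_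
  split_ifs
  · exact hP _ _
  · exact le_rfl

lemma le_Mg (P : (Fin n → X) → (Fin n → Y) → ℝ) (hP : ∀ x y, 0 ≤ P x y) (k x y) :
    P x y ≤ Mg P k x y := by
  unfold Mg
  have h0 : ∀ x' y', 0 ≤ (if (∀ j : Fin n, (j : ℕ) < k → x' j = x j) ∧
      (∀ j : Fin n, (j : ℕ) < k → y' j = y j) then P x' y' else 0) := by
    intro x' y'
    split_ifs
    · exact hP _ _
    · exact le_rfl
  refine le_trans ?_ (Finset.single_le_sum (fun x' _ => Finset.sum_nonneg fun y' _ => h0 x' y')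
    (Finset.mem_univ x))
  refine le_trans ?_ (Finset.single_le_sum (fun y' _ => h0 x y') (Finset.mem_univ y))
  simp

lemma le_Ag (P : (Fin n → X) → (Fin n → Y) → ℝ) (hP : ∀ x y, 0 ≤ P x y) (k x y) :
    P x y ≤ Ag P k x y := by
  unfold Ag
  have h0 : ∀ x' y', 0 ≤ (if (∀ j : Fin n, j < k → x' j = x j) ∧
      (∀ j : Fin n, j ≤ k → y' j = y j) then P x' y' else 0) := by
    intro x' y'
    split_ifs
    · exact hP _ _
    · exact le_rfl
  refine le_trans ?_ (Finset.single_le_sum (fun x' _ => Finset.sum_nonneg fun y' _ => h0 x' y')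
    (Finset.mem_univ x))
  refine le_trans ?_ (Finset.single_le_sum (fun y' _ => h0 x y') (Finset.mem_univ y))
  simp

lemma Mg_congr (P : (Fin n → X) → (Fin n → Y) → ℝ) (k : ℕ) {x x' : Fin n → X} {y y' : Fin n → Y}
    (hx : ∀ j : Fin n, (j : ℕ) < k → x j = x' j) (hy : ∀ j : Fin n, (j : ℕ) < k → y j = y' j) :
    Mg P k x y = Mg P k x' y' := by
  unfold Mg
  refine Finset.sum_congr rfl fun u _ => Finset.sum_congr rfl fun v _ => ?_
  congr 1
  apply propext
  constructor
  · rintro ⟨h1, h2⟩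
    exact ⟨fun j hj => (h1 j hj).trans (hx j hj), fun j hj => (h2 j hj).trans (hy j hj)⟩
  · rintro ⟨h1, h2⟩
    exact ⟨fun j hj => (h1 j hj).trans (hx j hj).symm, fun j hj => (h2 j hj).trans (hy j hj).symm⟩

lemma Ag_congr (P : (Fin n → X) → (Fin n → Y) → ℝ) (k : Fin n) {x x' : Fin n → X}
    {y y' : Fin n → Y}
    (hx : ∀ j : Fin n, j < k → x j = x' j) (hy : ∀ j : Fin n, j ≤ k → y j = y' j) :
    Ag P k x y = Ag P k x' y' := by
  unfold Ag
  refine Finset.sum_congr rfl fun u _ => Finset.sum_congr rfl fun v _ => ?_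
  congr 1
  apply propext
  constructor
  · rintro ⟨h1, h2⟩
    exact ⟨fun j hj => (h1 j hj).trans (hx j hj), fun j hj => (h2 j hj).trans (hy j hj)⟩
  · rintro ⟨h1, h2⟩
    exact ⟨fun j hj => (h1 j hj).trans (hx j hj).symm, fun j hj => (h2 j hj).trans (hy j hj).symm⟩

lemma agree_update_lt {Z : Type} [DecidableEq Z] (k : Fin n) (u x : Fin n → Z) (a : Z) :
    (∀ j : Fin n, (j : ℕ) < (k : ℕ) + 1 → u j = Function.update x k a j) ↔
      (∀ j, j < k → u j = x j) ∧ u k = a := by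
  constructor
  · intro h
    refine ⟨fun j hj => ?_, ?_⟩
    · have := h j (by have := Fin.lt_def.1 hj; omega)
      rwa [Function.update_of_ne hj.ne] at this
    · simpa using h k (by omega)
  · rintro ⟨h1, h2⟩ j hj
    by_cases hjk : j = k
    · subst hjk; simpa using h2
    · rw [Function.update_of_ne hjk]
      apply h1
      rw [Fin.lt_def]
      have : (j : ℕ) ≠ k := fun h => hjk (Fin.ext h)
      omega

lemma sum_Mg_update (P : (Fin n → X) → (Fin n → Y) → ℝ) (k : Fin n) (x y) :
    ∑ a, Mg P ((k : ℕ) + 1) (Function.update x k a) y = Ag P k x y := by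
  unfold Mg Ag
  rw [Finset.sum_comm]
  refine Finset.sum_congr rfl fun u _ => ?_
  rw [Finset.sum_comm]
  refine Finset.sum_congr rfl fun v _ => ?_
  have : ∀ a, (if (∀ j : Fin n, (j : ℕ) < (k : ℕ) + 1 → u j = Function.update x k a j) ∧
      (∀ j : Fin n, (j : ℕ) < (k : ℕ) + 1 → v j = y j) then P u v else 0) =
      if u k = a then (if (∀ j, j < k → u j = x j) ∧ (∀ j, j ≤ k → v j = y j)
        then P u v else 0) else 0 := by
    intro a
    rw [← ite_and]
    congr 1
    rw [agree_update_lt]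
    simp only [Nat.lt_succ_iff, ← Fin.le_def]
    apply propext
    tauto
  rw [Finset.sum_congr rfl fun a _ => this a]
  simp only [Finset.sum_ite_eq, Finset.mem_univ, if_true]

lemma sum_Ag_update (P : (Fin n → X) → (Fin n → Y) → ℝ) (k : Fin n) (x y) :
    ∑ b, Ag P k x (Function.update y k b) = Mg P k x y := by
  unfold Mg Ag
  rw [Finset.sum_comm]
  refine Finset.sum_congr rfl fun u _ => ?_
  rw [Finset.sum_comm]
  refine Finset.sum_congr rfl fun v _ => ?_
  have : ∀ b, (if (∀ j, j < k → u j = x j) ∧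
      (∀ j, j ≤ k → v j = Function.update y k b j) then P u v else 0) =
      if v k = b then (if (∀ j : Fin n, (j : ℕ) < (k : ℕ) → u j = x j) ∧
        (∀ j : Fin n, (j : ℕ) < (k : ℕ) → v j = y j) then P u v else 0) else 0 := by
    intro b
    rw [← ite_and]
    congr 1
    have h := agree_update_lt k v y b
    simp only [Nat.lt_succ_iff, ← Fin.le_def] at h
    rw [h]
    simp only [← Fin.lt_def]
    apply propext
    tauto
  rw [Finset.sum_congr rfl fun b _ => this b]
  simp only [Finset.sum_ite_eq, Finset.mem_univ, if_true]

/-- key change-of-measure bound -/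
lemma key [Nonempty X] [Nonempty Y] (P Q : (Fin n → X) → (Fin n → Y) → ℝ)
    (hP : ∀ x y, 0 < P x y)
    (hP1 : ∑ x, ∑ y, P x y = 1) (hQ : ∀ x y, 0 ≤ Q x y) :
    ∑ x, ∑ y, P x y * ((∏ i : Fin n, (Ag Q i x y / Mg Q i x y)) /
      (∏ i : Fin n, (Ag P i x y / Mg P i x y))) ≤ 1 := by
  have hA : ∀ i x y, 0 < Ag P i x y := fun i x y => (hP x y).trans_le (le_Ag P (fun x y => (hP x y).le) i x y)
  have hM : ∀ i x y, 0 < Mg P i x y := fun i x y => (hP x y).trans_le (le_Mg P (fun x y => (hP x y).le) i x y)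
  set f : Fin n → (Fin n → X) → (Fin n → Y) → ℝ := fun i x y =>
    (Ag Q i x y / Mg Q i x y) / (Ag P i x y / Mg P i x y) with hf
  have hf0 : ∀ i x y, 0 ≤ f i x y := fun i x y =>
    div_nonneg (div_nonneg (Ag_nonneg Q hQ _ _ _) (Mg_nonneg Q hQ _ _ _))
      (div_nonneg (hA _ _ _).le (hM _ _ _).le)
  set h : ℕ → (Fin n → X) → (Fin n → Y) → ℝ := fun k x y =>
    ∏ i ∈ Finset.univ.filter (fun i : Fin n => (i : ℕ) < k), f i x y with hh
  have hh0 : ∀ k x y, 0 ≤ h k x y := fun k x y => Finset.prod_nonneg fun i _ => hf0 i x y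
  have hcx : (0 : ℝ) < Fintype.card X := by exact_mod_cast Fintype.card_pos
  have hcy : (0 : ℝ) < Fintype.card Y := by exact_mod_cast Fintype.card_pos
  have hfc : ∀ (i : Fin n) {x x' : Fin n → X} {y y' : Fin n → Y},
      (∀ j, j < i → x j = x' j) → (∀ j, j ≤ i → y j = y' j) → f i x y = f i x' y' := by
    intro i x x' y y' hx hy
    simp only [hf]
    rw [Ag_congr Q i hx hy, Ag_congr P i hx hy,
      Mg_congr Q i (fun j hj => hx j hj) (fun j hj => hy j (le_of_lt hj)),
      Mg_congr P i (fun j hj => hx j hj) (fun j hj => hy j (le_of_lt hj))]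
  have hhc : ∀ (k : ℕ) {x x' : Fin n → X} {y y' : Fin n → Y},
      (∀ j : Fin n, (j : ℕ) < k → x j = x' j) → (∀ j : Fin n, (j : ℕ) < k → y j = y' j) →
      h k x y = h k x' y' := by
    intro k x x' y y' hx hy
    refine Finset.prod_congr rfl fun i hi => ?_
    have hi' : (i : ℕ) < k := by simpa using hi
    exact hfc i (fun j hj => hx j (by have := Fin.lt_def.1 hj; omega))
      (fun j hj => hy j (by have := Fin.le_def.1 hj; omega))
  have step : ∀ k : Fin n, (Fintype.card X : ℝ) * Fintype.card Y *
      (∑ x, ∑ y, Mg P ((k : ℕ) + 1) x y * h ((k : ℕ) + 1) x y) ≤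
      ∑ x, ∑ y, Mg P k x y * h k x y := by
    intro k
    have hsucc : ∀ x y, h ((k : ℕ) + 1) x y = f k x y * h k x y := by
      intro x y
      have : Finset.univ.filter (fun i : Fin n => (i : ℕ) < (k : ℕ) + 1) =
          insert k (Finset.univ.filter (fun i : Fin n => (i : ℕ) < (k : ℕ))) := by
        ext i
        simp [Fin.ext_iff]
        omega
      simp only [hh]
      rw [this, Finset.prod_insert (by simp)]
    have une : ∀ {Z : Type} (x : Fin n → Z) (a : Z) (j : Fin n), j < k →
        Function.update x k a j = x j := by
      intro Z x a j hj
      exact Function.update_of_ne hj.ne _ _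
    have e1 : (Fintype.card X : ℝ) * ∑ x, ∑ y, Mg P ((k : ℕ) + 1) x y * h ((k : ℕ) + 1) x y
        = ∑ x, ∑ y, (Ag Q k x y / Mg Q k x y) * (Mg P k x y * h k x y) := by
      rw [← sum_update_avg k]
      refine Finset.sum_congr rfl fun x _ => ?_
      rw [Finset.sum_comm]
      refine Finset.sum_congr rfl fun y _ => ?_
      have : ∀ a, Mg P ((k : ℕ) + 1) (Function.update x k a) y *
          h ((k : ℕ) + 1) (Function.update x k a) y =
          Mg P ((k : ℕ) + 1) (Function.update x k a) y * (f k x y * h k x y) := by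
        intro a
        rw [hsucc, hfc k (fun j hj => une x a j hj) (fun j _ => rfl),
          hhc k (fun j hj => une x a j hj) (fun j _ => rfl)]
      rw [Finset.sum_congr rfl fun a _ => this a, ← Finset.sum_mul, sum_Mg_update]
      simp only [hf]
      have := (hA k x y).ne'
      have := (hM k x y).ne'
      field_simp
    have e2 : (Fintype.card Y : ℝ) * ∑ x, ∑ y, (Ag Q k x y / Mg Q k x y) * (Mg P k x y * h k x y)
        ≤ ∑ x, ∑ y, Mg P k x y * h k x y := by
      rw [Finset.mul_sum]
      refine Finset.sum_le_sum fun x _ => ?_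
      rw [← sum_update_avg k]
      refine Finset.sum_le_sum fun y _ => ?_
      have : ∀ b, (Ag Q k x (Function.update y k b) / Mg Q k x (Function.update y k b)) *
          (Mg P k x (Function.update y k b) * h k x (Function.update y k b)) =
          Ag Q k x (Function.update y k b) * ((Mg P k x y * h k x y) / Mg Q k x y) := by
        intro b
        rw [hhc k (fun j _ => rfl) (fun j hj => une y b j hj),
          Mg_congr P k (fun j _ => rfl) (fun j hj => une y b j hj),
          Mg_congr Q k (fun j _ => rfl) (fun j hj => une y b j hj)]
        ring
      rw [Finset.sum_congr rfl fun b _ => this b, ← Finset.sum_mul, sum_Ag_update]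
      have hn0 : 0 ≤ Mg P k x y * h k x y := mul_nonneg (hM _ _ _).le (hh0 _ _ _)
      by_cases hz : Mg Q k x y = 0
      · rw [hz]; simpa using hn0
      · rw [mul_div_cancel₀ _ hz]
    calc _ = (Fintype.card Y : ℝ) * ((Fintype.card X : ℝ) *
          ∑ x, ∑ y, Mg P ((k : ℕ) + 1) x y * h ((k : ℕ) + 1) x y) := by ring
      _ ≤ _ := by rw [e1]; exact e2
  have main : ∀ k : ℕ, k ≤ n → ((Fintype.card X : ℝ) * Fintype.card Y) ^ k *
      (∑ x, ∑ y, Mg P k x y * h k x y) ≤ ((Fintype.card X : ℝ) * Fintype.card Y) ^ n := by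
    intro k
    induction k with
    | zero =>
      intro _
      simp [hh, Mg_zero, hP1, mul_pow]
    | succ k ih =>
      intro hk
      refine le_trans ?_ (ih (by omega))
      rw [pow_succ, mul_assoc]
      exact mul_le_mul_of_nonneg_left (step ⟨k, hk⟩) (by positivity)
  have fin := main n le_rfl
  have hpos : 0 < ((Fintype.card X : ℝ) * Fintype.card Y) ^ n := by positivity
  have fin2 : ∑ x, ∑ y, Mg P n x y * h n x y ≤ 1 := by
    by_contra hcon
    push Not at hcon
    nlinarith
  refine le_trans (le_of_eq ?_) fin2
  refine Finset.sum_congr rfl fun x _ => Finset.sum_congr rfl fun y _ => ?_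
  rw [Mg_full, ← Finset.prod_div_distrib]
  simp [hh, hf]

lemma causalCond_nonneg (p : (Fin n → X) → ℝ) (r : (Fin n → X) → (Fin n → Y) → ℝ)
    (h : ∀ x y, 0 ≤ p x * r x y) (x y) : 0 ≤ causalCond p r x y := by
  rw [causalCond_eq]
  exact Finset.prod_nonneg fun i _ => div_nonneg (Ag_nonneg _ h _ _ _) (Mg_nonneg _ h _ _ _)

lemma causalCond_pos (p : (Fin n → X) → ℝ) (r : (Fin n → X) → (Fin n → Y) → ℝ)
    (h : ∀ x y, 0 ≤ p x * r x y) (x y) (hxy : 0 < p x * r x y) : 0 < causalCond p r x y := by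
  rw [causalCond_eq]
  exact Finset.prod_pos fun i _ => div_pos (hxy.trans_le (le_Ag _ h i x y))
    (hxy.trans_le (le_Mg _ h i x y))

end helpers
end FFRD

open FFRD in
/-- Lemma 6: one step of the Blahut–Arimoto-type iteration yields
computable lower and upper bounds sandwiching `Rₙ(D_k)`. -/
theorem BA_iteration_bounds
    {X Y : Type} [Fintype X] [Nonempty X] [DecidableEq X] [Fintype Y] [Nonempty Y]
    [DecidableEq Y]
    (n : ℕ) (hn : 1 ≤ n)
    (p : (Fin n → X) → ℝ) (hp : IsPMF p) (hppos : ∀ x, 0 < p x)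
    (lam : ℝ) (hlam : 0 ≤ lam)
    (d : (Fin n → X) → (Fin n → Y) → ℝ) (hd : ∀ x y, 0 ≤ d x y)
    (q0 : (Fin n → X) → (Fin n → Y) → ℝ)
    (hq0 : IsCausalCondKernel q0) (hq0pos : ∀ x y, 0 < q0 x y)
    (r1 : (Fin n → X) → (Fin n → Y) → ℝ)
    (hr1 : ∀ x y, r1 x y =
      q0 x y * 2 ^ (-(lam * d x y)) / ∑ y', q0 x y' * 2 ^ (-(lam * d x y')))
    (q1 : (Fin n → X) → (Fin n → Y) → ℝ) (hq1 : q1 = causalCond p r1)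
    (c : (Fin n → X) → (Fin n → Y) → ℝ) (hc : ∀ x y, c x y = q1 x y / q0 x y)
    (γ : (Fin n → X) → ℝ)
    (hγ : ∀ x, γ x = (∑ y, q0 x y * 2 ^ (-(lam * d x y)))⁻¹)
    (Dk : ℝ) (hDk : Dk = ∑ x, ∑ y, p x * r1 x y * d x y) :
    (1 / (n : ℝ)) * (-(lam * Dk) + (∑ x, p x * Real.logb 2 (γ x)) -
        Real.logb 2 (⨆ z : (Fin n → X) × (Fin n → Y), c z.1 z.2)) ≤
      Rn n p d Dk ∧
    Rn n p d Dk ≤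
      (1 / (n : ℝ)) * (-(lam * Dk) + (∑ x, p x * Real.logb 2 (γ x)) -
        ∑ x, ∑ y, p x * r1 x y * Real.logb 2 (c x y)) := by
  have hnpos : (0 : ℝ) ≤ 1 / (n : ℝ) := by positivity
  have hl2 : 0 < Real.log 2 := Real.log_pos (by norm_num)
  have he : ∀ x y, (0 : ℝ) < 2 ^ (-(lam * d x y)) := fun x y => Real.rpow_pos_of_pos (by norm_num) _
  have hZ : ∀ x, 0 < ∑ y, q0 x y * (2 : ℝ) ^ (-(lam * d x y)) := fun x =>
    Finset.sum_pos (fun y _ => mul_pos (hq0pos x y) (he x y)) Finset.univ_nonempty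
  have hγpos : ∀ x, 0 < γ x := fun x => by rw [hγ]; exact inv_pos.2 (hZ x)
  have hr1' : ∀ x y, r1 x y = q0 x y * (2 : ℝ) ^ (-(lam * d x y)) * γ x := by
    intro x y
    rw [hr1, hγ, div_eq_mul_inv]
  have hr1pos : ∀ x y, 0 < r1 x y := fun x y => by
    rw [hr1']; exact mul_pos (mul_pos (hq0pos x y) (he x y)) (hγpos x)
  have hr1sum : ∀ x, ∑ y, r1 x y = 1 := by
    intro x
    simp only [hr1]
    rw [← Finset.sum_div]
    exact div_self (hZ x).ne'
  have hP : ∀ x y, 0 < p x * r1 x y := fun x y => mul_pos (hppos x) (hr1pos x y)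
  have sum1 : ∀ r : (Fin n → X) → (Fin n → Y) → ℝ, (∀ x, ∑ y, r x y = 1) →
      ∀ g : (Fin n → X) → ℝ, ∑ x, ∑ y, p x * r x y * g x = ∑ x, p x * g x := by
    intro r hr g
    refine Finset.sum_congr rfl fun x _ => ?_
    rw [← Finset.sum_mul, ← Finset.mul_sum, hr x, mul_one]
  have sum1' : ∀ r : (Fin n → X) → (Fin n → Y) → ℝ, (∀ x, ∑ y, r x y = 1) →
      ∑ x, ∑ y, p x * r x y = 1 := by
    intro r hr
    have := sum1 r hr (fun _ => 1)
    simpa [hp.2] using this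
  have hq1pos : ∀ x y, 0 < q1 x y := fun x y => by
    rw [hq1]; exact causalCond_pos p r1 (fun x y => (hP x y).le) x y (hP x y)
  have hcpos : ∀ x y, 0 < c x y := fun x y => by
    rw [hc]; exact div_pos (hq1pos x y) (hq0pos x y)
  set C : ℝ := ⨆ z : (Fin n → X) × (Fin n → Y), c z.1 z.2 with hC
  have hcC : ∀ x y, c x y ≤ C := fun x y =>
    le_ciSup (f := fun z : (Fin n → X) × (Fin n → Y) => c z.1 z.2)
      (Set.finite_range _).bddAbove (x, y)
  have hCpos : 0 < C := by
    have x0 : Fin n → X := fun _ => Classical.arbitrary X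
    have y0 : Fin n → Y := fun _ => Classical.arbitrary Y
    exact (hcpos x0 y0).trans_le (hcC x0 y0)
  have logr : ∀ x y, Real.logb 2 ((2 : ℝ) ^ (-(lam * d x y))) = -(lam * d x y) := fun x y =>
    Real.logb_rpow (by norm_num) (by norm_num)
  have lower : ∀ r : (Fin n → X) → (Fin n → Y) → ℝ, IsCondPMF r →
      (∑ x, ∑ y, p x * r x y * d x y) ≤ Dk →
      -(lam * Dk) + (∑ x, p x * Real.logb 2 (γ x)) - Real.logb 2 C ≤ directedInfo p r := by
    intro r hr hrD
    have hpr : ∀ x y, 0 ≤ p x * r x y := fun x y => mul_nonneg (hppos x).le (hr.1 x y)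
    set w : (Fin n → X) → (Fin n → Y) → ℝ := fun x y =>
      causalCond p r x y * 2 ^ (-(lam * d x y)) * γ x with hw
    have hw0 : ∀ x y, 0 ≤ w x y := fun x y =>
      mul_nonneg (mul_nonneg (causalCond_nonneg p r hpr x y) (he x y).le) (hγpos x).le
    have hwsum : ∑ x, ∑ y, p x * w x y ≤ C := by
      have hk := key (fun x y => p x * r1 x y) (fun x y => p x * r x y) hP
        (sum1' r1 hr1sum) hpr
      simp only [← causalCond_eq] at hk
      calc ∑ x, ∑ y, p x * w x y
          ≤ ∑ x, ∑ y, C * (p x * r1 x y * (causalCond p r x y / causalCond p r1 x y)) := by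
            refine Finset.sum_le_sum fun x _ => Finset.sum_le_sum fun y _ => ?_
            have h1 : p x * w x y =
                c x y * (p x * r1 x y * (causalCond p r x y / causalCond p r1 x y)) := by
              rw [hc, ← hq1, hr1' x y]
              simp only [hw]
              have := (hq1pos x y).ne'
              have := (hq0pos x y).ne'
              field_simp
            rw [h1]
            refine mul_le_mul_of_nonneg_right (hcC x y) ?_
            rw [← hq1]
            exact mul_nonneg (hP x y).le
              (div_nonneg (causalCond_nonneg p r hpr x y) (hq1pos x y).le)
        _ = C * ∑ x, ∑ y, (p x * r1 x y * (causalCond p r x y / causalCond p r1 x y)) := by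
            simp only [Finset.mul_sum]
        _ ≤ C * 1 := mul_le_mul_of_nonneg_left hk hCpos.le
        _ = C := mul_one C
    have pt : ∀ x y, -lam * (p x * r x y * d x y) + p x * r x y * Real.logb 2 (γ x)
        - Real.logb 2 C * (p x * r x y)
        + (1 / Real.log 2) * (p x * r x y) - (1 / (C * Real.log 2)) * (p x * w x y) ≤
        p x * r x y * Real.logb 2 (r x y / causalCond p r x y) := by
      intro x y
      rcases (hr.1 x y).eq_or_lt with h0 | h0
      · rw [← h0]
        have : 0 ≤ (1 / (C * Real.log 2)) * (p x * w x y) :=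
          mul_nonneg (by positivity) (mul_nonneg (hppos x).le (hw0 x y))
        simp
        simpa using this
      · have hq := causalCond_pos p r hpr x y (mul_pos (hppos x) h0)
        have hwp : 0 < w x y := mul_pos (mul_pos hq (he x y)) (hγpos x)
        have hlog := Real.log_le_sub_one_of_pos (div_pos hwp (mul_pos h0 hCpos))
        have h2 : Real.logb 2 (w x y / (r x y * C)) ≤ (w x y / (r x y * C) - 1) / Real.log 2 := by
          unfold Real.logb
          gcongr
        have h3 : Real.logb 2 (w x y / (r x y * C)) =
            - Real.logb 2 (r x y / causalCond p r x y) - lam * d x y + Real.logb 2 (γ x)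
              - Real.logb 2 C := by
          rw [Real.logb_div hwp.ne' (mul_pos h0 hCpos).ne', Real.logb_mul h0.ne' hCpos.ne',
            Real.logb_div h0.ne' hq.ne']
          simp only [hw]
          rw [Real.logb_mul (mul_pos hq (he x y)).ne' (hγpos x).ne',
            Real.logb_mul hq.ne' (he x y).ne', logr]
          ring
        rw [h3] at h2
        have h4 := mul_le_mul_of_nonneg_left h2 (mul_pos (hppos x) h0).le
        have h5 : p x * r x y * ((w x y / (r x y * C) - 1) / Real.log 2) =
            (1 / (C * Real.log 2)) * (p x * w x y) - (1 / Real.log 2) * (p x * r x y) := by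
          have := h0.ne'
          have := hCpos.ne'
          have := hl2.ne'
          field_simp
        rw [h5] at h4
        linarith
    have hs := Finset.sum_le_sum fun x (_ : x ∈ Finset.univ) =>
      Finset.sum_le_sum fun y (_ : y ∈ Finset.univ) => pt x y
    simp only [Finset.sum_add_distrib, Finset.sum_sub_distrib, ← Finset.mul_sum] at hs
    have e1 := sum1 r hr.2 (fun x => Real.logb 2 (γ x))
    have e2 := sum1' r hr.2
    simp only [Finset.mul_sum] at hs e1 e2 hwsum ⊢
    simp only [← Finset.mul_sum] at hs
    unfold directedInfo
    have e3 : ∑ x, p x * ∑ y, r x y = 1 := by simpa [Finset.mul_sum] using e2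
    have e4 : (1 / (C * Real.log 2)) * ∑ x, p x * ∑ y, w x y ≤ 1 / Real.log 2 := by
      have : ∑ x, p x * ∑ y, w x y ≤ C := by simpa [Finset.mul_sum] using hwsum
      calc _ ≤ (1 / (C * Real.log 2)) * C := mul_le_mul_of_nonneg_left this (by positivity)
        _ = _ := by field_simp
    have e5 : lam * (∑ x, ∑ y, p x * r x y * d x y) ≤ lam * Dk :=
      mul_le_mul_of_nonneg_left hrD hlam
    rw [e1, e3] at hs
    linarith
  have hI1 : directedInfo p r1 = -(lam * Dk) + (∑ x, p x * Real.logb 2 (γ x)) -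
        ∑ x, ∑ y, p x * r1 x y * Real.logb 2 (c x y) := by
    have pt : ∀ x y, p x * r1 x y * Real.logb 2 (r1 x y / causalCond p r1 x y) =
        -lam * (p x * r1 x y * d x y) + p x * r1 x y * Real.logb 2 (γ x)
          - p x * r1 x y * Real.logb 2 (c x y) := by
      intro x y
      have : Real.logb 2 (r1 x y / causalCond p r1 x y) =
          -(lam * d x y) + Real.logb 2 (γ x) - Real.logb 2 (c x y) := by
        rw [← hq1, Real.logb_div (hr1pos x y).ne' (hq1pos x y).ne', hc,
          Real.logb_div (hq1pos x y).ne' (hq0pos x y).ne', hr1' x y,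
          Real.logb_mul (mul_pos (hq0pos x y) (he x y)).ne' (hγpos x).ne',
          Real.logb_mul (hq0pos x y).ne' (he x y).ne', logr]
        ring
      rw [this]
      ring
    unfold directedInfo
    rw [Finset.sum_congr rfl fun x _ => Finset.sum_congr rfl fun y _ => pt x y]
    simp only [Finset.sum_add_distrib, Finset.sum_sub_distrib]
    rw [sum1 r1 hr1sum (fun x => Real.logb 2 (γ x)), hDk]
    simp only [← Finset.mul_sum]
    ring
  have hmem : directedInfo p r1 ∈ {v | ∃ r : (Fin n → X) → (Fin n → Y) → ℝ, IsCondPMF r ∧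
      (∑ x, ∑ y, p x * r x y * d x y) ≤ Dk ∧ v = directedInfo p r} :=
    ⟨r1, ⟨fun x y => (hr1pos x y).le, hr1sum⟩, hDk.ge, rfl⟩
  have hlb : -(lam * Dk) + (∑ x, p x * Real.logb 2 (γ x)) - Real.logb 2 C ∈
      lowerBounds {v | ∃ r : (Fin n → X) → (Fin n → Y) → ℝ, IsCondPMF r ∧
      (∑ x, ∑ y, p x * r x y * d x y) ≤ Dk ∧ v = directedInfo p r} := by
    rintro v ⟨r, hr, hrD, rfl⟩
    exact lower r hr hrD
  unfold Rn
  refine ⟨mul_le_mul_of_nonneg_left (le_csInf ⟨_, hmem⟩ hlb) hnpos,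
    mul_le_mul_of_nonneg_left ?_ hnpos⟩
  rw [← hI1]
  exact csInf_le ⟨_, hlb⟩ hmem
end
end

section
/- Let 0 < p < 1 and 0 < q < 1, let π₀ = q/(p+q) and π₁ = p/(p+q), and let pₙ be the pmf on {0,1}ⁿ of the stationary two-state Markov chain with pₙ(xⁿ) = π_{x₁}·∏_{i=2}^n P(x_i|x_{i−1}), where P(x_i ≠ x_{i−1} | x_{i−1}=0) = p and P(x_i ≠ x_{i−1} | x_{i−1}=1) = q. Let the distortion be the per-letter Hamming distortion d(xⁿ,x̂ⁿ) = (1/n)·Σ_{i=1}^n 1{x_i ≠ x̂_i}, with reconstruction alphabet {0,1}. Then for every D with 0 ≤ D < 1/2 and D ≤ min{p, 1−p, q, 1−q}, the n-th order rate distortion function with feed-forward equals Rₙ(D) = (1/n)·H_b(π₁) + ((n−1)/n)·( π₀·H_b(p) + π₁·H_b(q) ) − H_b(D), where H_b(t) = −t log₂ t − (1−t) log₂(1−t) is the binary entropy function. -/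
open scoped BigOperators
open Filter

noncomputable section

namespace FFRD

/-- Binary entropy function (base 2). -/
def Hb (t : ℝ) : ℝ := -(t * Real.logb 2 t) - (1 - t) * Real.logb 2 (1 - t)

/-- The pmf on `{0,1}ⁿ` (`Bool`-valued blocks) of the stationary two-state Markov chain with
flip probability `p` from state `0` (`false`) and `q` from state `1` (`true`); the initial
distribution is the stationary one `π₀ = q/(p+q)`, `π₁ = p/(p+q)`. -/
def markovPMF (p q : ℝ) {n : ℕ} (x : Fin n → Bool) : ℝ :=
  ∏ i : Fin n,
    if (i : ℕ) = 0 then (if x i then p / (p + q) else q / (p + q))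
    else
      (if x ⟨(i : ℕ) - 1, Nat.lt_of_le_of_lt (Nat.sub_le _ _) i.isLt⟩ then
        (if x i then 1 - q else q)
       else (if x i then p else 1 - p))

/-- Per-letter Hamming distortion on blocks of length `n`. -/
def hamming (n : ℕ) (x y : Fin n → Bool) : ℝ :=
  (1 / (n : ℝ)) * ∑ i, if x i = y i then (0 : ℝ) else 1

end FFRD

set_option linter.unusedSectionVars false
set_option linter.unusedVariables false

namespace FFRD

section chain
variable {Z : Type} [Fintype Z] [DecidableEq Z] [Nonempty Z] {n : ℕ}

lemma sum_upd (i : Fin n) (F : (Fin n → Z) → ℝ) :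
    ∑ z, ∑ a, F (Function.update z i a) = (Fintype.card Z : ℝ) * ∑ z, F z := by
  have hinv : Function.Involutive
      (fun w : (Fin n → Z) × Z => (Function.update w.1 i w.2, w.1 i)) := by
    intro w
    simp
  rw [← Fintype.sum_prod_type' (f := fun z a => F (Function.update z i a))]
  rw [← Equiv.sum_comp hinv.toPerm]
  rw [Fintype.sum_prod_type]
  simp [Function.Involutive.coe_toPerm, Finset.mul_sum]

def DepLt (k : ℕ) (G : (Fin n → Z) → ℝ) : Prop :=
  ∀ z z' : Fin n → Z, (∀ j : Fin n, (j : ℕ) < k → z j = z' j) → G z = G z'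

lemma DepLt.mono {k l : ℕ} (h : k ≤ l) {G : (Fin n → Z) → ℝ} (hG : DepLt k G) : DepLt l G :=
  fun z z' hz => hG z z' fun j hj => hz j (by omega)

lemma DepLt.mul {k : ℕ} {G G' : (Fin n → Z) → ℝ} (hG : DepLt k G) (hG' : DepLt k G') :
    DepLt k (fun z => G z * G' z) :=
  fun z z' hz => by
    show G z * G' z = G z' * G' z'
    rw [hG z z' hz, hG' z z' hz]

lemma DepLt.upd {i : Fin n} {k : ℕ} (h : k ≤ i) {G : (Fin n → Z) → ℝ} (hG : DepLt k G)
    (z : Fin n → Z) (a : Z) : G (Function.update z i a) = G z := by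
  apply hG
  intro j hj
  rw [Function.update_of_ne]
  intro hji
  subst hji
  omega

def PP (K : Fin n → (Fin n → Z) → ℝ) (k : ℕ) (z : Fin n → Z) : ℝ :=
  ∏ j ∈ Finset.univ.filter (fun j : Fin n => (j : ℕ) < k), K j z

lemma PP_zero (K : Fin n → (Fin n → Z) → ℝ) (z) : PP K 0 z = 1 := by
  simp [PP]

lemma PP_full (K : Fin n → (Fin n → Z) → ℝ) (z) : PP K n z = ∏ j, K j z := by
  simp [PP]

lemma PP_succ (K : Fin n → (Fin n → Z) → ℝ) (i : Fin n) (z) :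
    PP K (i + 1) z = PP K i z * K i z := by
  have : Finset.univ.filter (fun j : Fin n => (j : ℕ) < i + 1)
      = insert i (Finset.univ.filter (fun j : Fin n => (j : ℕ) < i)) := by
    ext j
    simp only [Finset.mem_filter, Finset.mem_univ, true_and, Finset.mem_insert, Fin.ext_iff]
    omega
  rw [PP, this, Finset.prod_insert (by simp), mul_comm]
  rfl

lemma PP_dep (K : Fin n → (Fin n → Z) → ℝ) (hdep : ∀ i : Fin n, DepLt (i + 1) (K i)) (k : ℕ) :
    DepLt k (PP K k) := by
  intro z z' hz
  apply Finset.prod_congr rfl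
  intro j hj
  simp only [Finset.mem_filter, Finset.mem_univ, true_and] at hj
  exact hdep j z z' fun l hl => hz l (by omega)

lemma avg (i : Fin n) (B L : (Fin n → Z) → ℝ) (hB : DepLt (i : ℕ) B) :
    (Fintype.card Z : ℝ) * ∑ z, B z * L z
      = ∑ z, B z * ∑ a, L (Function.update z i a) := by
  rw [← sum_upd i]
  apply Finset.sum_congr rfl
  intro z _
  rw [Finset.mul_sum]
  apply Finset.sum_congr rfl
  intro a _
  rw [hB.upd le_rfl]

lemma marg (K : Fin n → (Fin n → Z) → ℝ) (hdep : ∀ i : Fin n, DepLt (i + 1) (K i))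
    (hsum : ∀ i z, ∑ a, K i (Function.update z i a) = 1) (m : ℕ) :
    ∀ (k : ℕ) (_ : k + m = n) (G : (Fin n → Z) → ℝ) (_ : DepLt k G),
    (Fintype.card Z : ℝ) ^ m * ∑ z, G z * ∏ j, K j z = ∑ z, G z * PP K k z := by
  induction m with
  | zero =>
    intro k hk G _
    have : k = n := by omega
    subst this
    simp [PP_full]
  | succ m ih =>
    intro k hk G hG
    have h1 := ih (k + 1) (by omega) G (hG.mono (by omega))
    have h2 := avg (⟨k, by omega⟩ : Fin n) (fun z => G z * PP K k z) (K ⟨k, by omega⟩)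
      (hG.mul (PP_dep K hdep k))
    simp only [hsum, mul_one] at h2
    rw [← h2, pow_succ, mul_comm (_ ^ m), mul_assoc, h1]
    congr 1
    apply Finset.sum_congr rfl
    intro z _
    rw [PP_succ K ⟨k, by omega⟩ z]
    simp only [mul_assoc]

lemma total (K : Fin n → (Fin n → Z) → ℝ) (hdep : ∀ i : Fin n, DepLt (i + 1) (K i))
    (hsum : ∀ i z, ∑ a, K i (Function.update z i a) = 1) :
    ∑ z, ∏ j, K j z = 1 := by
  have h := marg K hdep hsum n 0 (by omega) (fun _ => 1) (fun _ _ _ => rfl)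
  simp only [PP_zero, one_mul, Finset.sum_const, Finset.card_univ, Fintype.card_fun,
    Fintype.card_fin, nsmul_eq_mul, mul_one] at h
  have hc : (Fintype.card Z : ℝ) ^ n ≠ 0 := by
    apply pow_ne_zero
    exact_mod_cast Fintype.card_ne_zero
  push_cast at h
  exact mul_left_cancel₀ hc (by rw [h, mul_one])

lemma onestep (K : Fin n → (Fin n → Z) → ℝ) (hdep : ∀ i : Fin n, DepLt (i + 1) (K i))
    (hsum : ∀ i z, ∑ a, K i (Function.update z i a) = 1) (i : Fin n)
    (G : (Fin n → Z) → ℝ) (hG : DepLt (i + 1 : ℕ) G) :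
    ∑ z, G z * ∏ j, K j z =
      ∑ z, (∑ a, G (Function.update z i a) * K i (Function.update z i a)) * ∏ j, K j z := by
  have hi := i.isLt
  have h1 := marg K hdep hsum (n - i - 1) (i + 1) (by omega) G hG
  have h2 := marg K hdep hsum (n - i - 1 + 1) i (by omega)
    (fun z => ∑ a, G (Function.update z i a) * K i (Function.update z i a)) (by
      intro z z' hz
      apply Finset.sum_congr rfl
      intro a _
      have : ∀ j : Fin n, (j : ℕ) < i + 1 →
          Function.update z i a j = Function.update z' i a j := by
        intro j hj
        by_cases hji : j = i
        · subst hji; simp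
        · rw [Function.update_of_ne hji, Function.update_of_ne hji]
          apply hz
          have : (j : ℕ) ≠ i := fun h => hji (Fin.ext h)
          omega
      rw [hG _ _ this, hdep i _ _ this])
  have h3 := avg i (PP K i) (fun z => G z * K i z) (PP_dep K hdep i)
  have hc : (Fintype.card Z : ℝ) ^ (n - i - 1 + 1) ≠ 0 := by
    apply pow_ne_zero
    exact_mod_cast Fintype.card_ne_zero
  apply mul_left_cancel₀ hc
  rw [h2, pow_succ, mul_comm (_ ^ _), mul_assoc, h1]
  simp only [PP_succ]
  calc _ = (Fintype.card Z : ℝ) * ∑ z, PP K i z * (G z * K i z) := by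
        congr 1; apply Finset.sum_congr rfl; intro z _; ring
    _ = _ := by rw [h3]; apply Finset.sum_congr rfl; intro z _; ring

lemma total_le (K : Fin n → (Fin n → Z) → ℝ) (hdep : ∀ i : Fin n, DepLt (i + 1) (K i))
    (hK : ∀ i z, 0 ≤ K i z)
    (hsum : ∀ i z, ∑ a, K i (Function.update z i a) ≤ 1) :
    ∑ z, ∏ j, K j z ≤ 1 := by
  have hc : 0 < (Fintype.card Z : ℝ) := by exact_mod_cast Fintype.card_pos
  have key : ∀ k, k ≤ n → (Fintype.card Z : ℝ) ^ k * ∑ z, PP K k z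
      ≤ (Fintype.card Z : ℝ) ^ n := by
    intro k
    induction k with
    | zero => intro _; simp [PP_zero]
    | succ k ih =>
      intro hk
      refine le_trans ?_ (ih (by omega))
      rw [pow_succ, mul_assoc]
      apply mul_le_mul_of_nonneg_left _ (by positivity)
      have h2 := avg (⟨k, by omega⟩ : Fin n) (PP K k) (K ⟨k, by omega⟩) (PP_dep K hdep k)
      have : ∀ z, PP K (k + 1) z = PP K k z * K ⟨k, by omega⟩ z :=
        fun z => PP_succ K ⟨k, by omega⟩ z
      simp only [this]
      rw [h2]
      apply Finset.sum_le_sum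
      intro z _
      exact mul_le_of_le_one_right (Finset.prod_nonneg fun _ _ => hK _ _) (hsum _ _)
  have h := key n le_rfl
  simp only [PP_full] at h
  have hcn : 0 < (Fintype.card Z : ℝ) ^ n := by positivity
  by_contra hcon
  push Not at hcon
  nlinarith

end chain

def bern (t : ℝ) (c : Bool) : ℝ := if c then t else 1 - t

def tt (p q : ℝ) {n : ℕ} (i : Fin n) (x : Fin n → Bool) : ℝ :=
  if (i : ℕ) = 0 then p / (p + q)
  else if x ⟨(i : ℕ) - 1, Nat.lt_of_le_of_lt (Nat.sub_le _ _) i.isLt⟩ then 1 - q else p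

lemma markov_eq (p q : ℝ) (hp0 : 0 < p) (hq0 : 0 < q) {n : ℕ} (x : Fin n → Bool) :
    markovPMF p q x = ∏ i, bern (tt p q i x) (x i) := by
  apply Finset.prod_congr rfl
  intro i _
  have : p + q ≠ 0 := by positivity
  unfold bern tt
  split_ifs
  · rfl
  · field_simp; ring
  all_goals ring

lemma tt_dep (p q : ℝ) {n : ℕ} (i : Fin n) : DepLt (Z := Bool) (i : ℕ) (tt p q i) := by
  intro x x' h
  unfold tt
  by_cases hi : (i : ℕ) = 0
  · simp [hi]
  · simp only [hi, if_false]
    rw [h _ (by simp; omega)]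

lemma tt_bd (p q : ℝ) (hp0 : 0 < p) (hp1 : p < 1) (hq0 : 0 < q) (hq1 : q < 1) (D : ℝ)
    (hD0 : 0 ≤ D) (h1 : D ≤ p) (h2 : D ≤ 1 - p) (h3 : D ≤ q) (h4 : D ≤ 1 - q) {n : ℕ}
    (i : Fin n) (x : Fin n → Bool) : D ≤ tt p q i x ∧ tt p q i x ≤ 1 - D := by
  unfold tt
  have : 0 < p + q := by positivity
  split_ifs
  · rw [le_div_iff₀ this, div_le_iff₀ this]
    constructor <;> nlinarith
  · constructor <;> linarith
  · constructor <;> linarith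

lemma tt_pos (p q : ℝ) (hp0 : 0 < p) (hp1 : p < 1) (hq0 : 0 < q) (hq1 : q < 1) {n : ℕ}
    (i : Fin n) (x : Fin n → Bool) : 0 < tt p q i x ∧ tt p q i x < 1 := by
  unfold tt
  have : 0 < p + q := by positivity
  split_ifs
  · rw [lt_div_iff₀ this, div_lt_iff₀ this]
    constructor <;> nlinarith
  · constructor <;> linarith
  · constructor <;> linarith

lemma bern_pos {t : ℝ} (h : 0 < t ∧ t < 1) (c : Bool) : 0 < bern t c := by
  unfold bern; split_ifs <;> linarith

lemma bern_nonneg {t : ℝ} (h : 0 ≤ t ∧ t ≤ 1) (c : Bool) : 0 ≤ bern t c := by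
  unfold bern; split_ifs <;> linarith

section entropy
variable (p q : ℝ) {n : ℕ}

def KM (i : Fin n) (x : Fin n → Bool) : ℝ := bern (tt p q i x) (x i)

lemma KM_dep (i : Fin n) : DepLt (Z := Bool) (i + 1 : ℕ) (KM p q i) := by
  intro x x' h
  unfold KM
  rw [tt_dep p q i x x' (fun j hj => h j (by omega)), h i (by omega)]

lemma KM_upd (i : Fin n) (x : Fin n → Bool) (a : Bool) :
    KM p q i (Function.update x i a) = bern (tt p q i x) a := by
  unfold KM
  rw [(tt_dep p q i).upd le_rfl]
  simp

lemma KM_sum (i : Fin n) (x : Fin n → Bool) :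
    ∑ a, KM p q i (Function.update x i a) = 1 := by
  simp [KM_upd, bern]

lemma stat (hp0 : 0 < p) (hq0 : 0 < q) (m : ℕ) : ∀ (hm : m < n),
    ∑ x : Fin n → Bool, (if x ⟨m, hm⟩ then (1:ℝ) else 0) * ∏ j, KM p q j x = p / (p + q) := by
  have h0 : p + q ≠ 0 := by positivity
  have htot := total (KM p q (n := n)) (KM_dep p q) (KM_sum p q)
  have hone : ∀ (m : ℕ) (hm : m < n),
      ∑ x : Fin n → Bool, (if x ⟨m, hm⟩ then (1:ℝ) else 0) * ∏ j, KM p q j x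
      = ∑ x : Fin n → Bool, tt p q ⟨m, hm⟩ x * ∏ j, KM p q j x := by
    intro m hm
    rw [onestep (KM p q) (KM_dep p q) (KM_sum p q) ⟨m, hm⟩]
    · simp [KM_upd, bern]
    · intro x x' h
      simp only [h ⟨m, hm⟩ (by simp)]
  induction m with
  | zero =>
    intro hm
    rw [hone]
    simp [tt, ← Finset.mul_sum, htot]
  | succ m ih =>
    intro hm
    have := ih (by omega)
    rw [hone]
    have e : ∀ x : Fin n → Bool, tt p q ⟨m + 1, hm⟩ x
        = p + (1 - q - p) * (if x ⟨m, by omega⟩ then (1:ℝ) else 0) := by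
      intro x
      simp only [tt, Nat.add_sub_cancel, Nat.add_eq_zero_iff, one_ne_zero, and_false, if_false]
      split_ifs <;> ring
    simp only [e, add_mul, mul_assoc, Finset.sum_add_distrib, ← Finset.mul_sum, this, htot]
    field_simp
    ring

lemma Hb_symm (t : ℝ) : Hb (1 - t) = Hb t := by
  unfold Hb; rw [sub_sub_cancel]; ring

lemma entropy (hp0 : 0 < p) (hp1 : p < 1) (hq0 : 0 < q) (hq1 : q < 1) (hn : 1 ≤ n) :
    ∑ x : Fin n → Bool, markovPMF p q x * Real.logb 2 (markovPMF p q x)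
      = - (Hb (p / (p + q)) + ((n : ℝ) - 1) *
          ((q / (p + q)) * Hb p + (p / (p + q)) * Hb q)) := by
  have h0 : p + q ≠ 0 := by positivity
  have htot := total (KM p q (n := n)) (KM_dep p q) (KM_sum p q)
  have hm : ∀ x : Fin n → Bool, markovPMF p q x = ∏ j, KM p q j x :=
    fun x => markov_eq p q hp0 hq0 x
  have hlog : ∀ x : Fin n → Bool, Real.logb 2 (∏ j, KM p q j x)
      = ∑ j, Real.logb 2 (KM p q j x) := by
    intro x
    apply Real.logb_prod
    intro i _
    exact (bern_pos (tt_pos p q hp0 hp1 hq0 hq1 i x) _).ne'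
  simp only [hm, hlog, Finset.mul_sum]
  rw [Finset.sum_comm]
  have hi : ∀ i : Fin n, ∑ x, (∏ j, KM p q j x) * Real.logb 2 (KM p q i x)
      = - ∑ x, Hb (tt p q i x) * ∏ j, KM p q j x := by
    intro i
    have := onestep (KM p q) (KM_dep p q) (KM_sum p q) i (fun x => Real.logb 2 (KM p q i x))
      (fun x x' h => by
        show Real.logb 2 (KM p q i x) = Real.logb 2 (KM p q i x')
        rw [KM_dep p q i x x' h])
    simp only [mul_comm (∏ j, _) _]
    rw [this, ← Finset.sum_neg_distrib]
    apply Finset.sum_congr rfl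
    intro x _
    simp only [KM_upd, bern, Hb]
    simp
    ring
  simp only [hi]
  obtain ⟨m, rfl⟩ : ∃ m, n = m + 1 := ⟨n - 1, by omega⟩
  rw [Fin.sum_univ_succ]
  have z0 : ∀ x : Fin (m+1) → Bool, tt p q 0 x = p / (p + q) := by intro x; simp [tt]
  have zs : ∀ (i : Fin m) (x : Fin (m+1) → Bool), Hb (tt p q i.succ x)
      = Hb p + (Hb q - Hb p) * (if x ⟨i, by omega⟩ then (1:ℝ) else 0) := by
    intro i x
    simp only [tt, Fin.val_succ, Nat.add_sub_cancel, Nat.add_eq_zero_iff, one_ne_zero,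
      and_false, if_false]
    split_ifs
    · rw [Hb_symm]; ring
    · ring
  simp only [z0, zs, add_mul, mul_assoc, Finset.sum_add_distrib, ← Finset.mul_sum, htot,
    stat p q hp0 hq0]
  simp
  field_simp
  ring

end entropy
end FFRD

namespace FFRD

section causal
variable {n : ℕ}

def Num (p : (Fin n → Bool) → ℝ) (r : (Fin n → Bool) → (Fin n → Bool) → ℝ)
    (i : Fin n) (x y : Fin n → Bool) : ℝ :=
  ∑ x' : Fin n → Bool, ∑ y' : Fin n → Bool,
        if (∀ j, j < i → x' j = x j) ∧ (∀ j, j ≤ i → y' j = y j)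
        then p x' * r x' y' else 0

def Den (p : (Fin n → Bool) → ℝ) (r : (Fin n → Bool) → (Fin n → Bool) → ℝ)
    (i : Fin n) (x y : Fin n → Bool) : ℝ :=
  ∑ x' : Fin n → Bool, ∑ y' : Fin n → Bool,
        if (∀ j, j < i → x' j = x j) ∧ (∀ j, j < i → y' j = y j)
        then p x' * r x' y' else 0

variable (p : (Fin n → Bool) → ℝ) (r : (Fin n → Bool) → (Fin n → Bool) → ℝ)

lemma causal_eq (x y : Fin n → Bool) :
    causalCond p r x y = ∏ i, (Num p r i x y / Den p r i x y) := rfl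

lemma Num_nonneg (hP : ∀ x y, 0 ≤ p x * r x y) (i : Fin n) (x y) : 0 ≤ Num p r i x y := by
  apply Finset.sum_nonneg; intro x' _
  apply Finset.sum_nonneg; intro y' _
  split_ifs
  · exact hP _ _
  · exact le_rfl

lemma Den_nonneg (hP : ∀ x y, 0 ≤ p x * r x y) (i : Fin n) (x y) : 0 ≤ Den p r i x y := by
  apply Finset.sum_nonneg; intro x' _
  apply Finset.sum_nonneg; intro y' _
  split_ifs
  · exact hP _ _
  · exact le_rfl

lemma le_dsum (F : (Fin n → Bool) → (Fin n → Bool) → ℝ) (hF : ∀ x y, 0 ≤ F x y) (x y) :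
    F x y ≤ ∑ x', ∑ y', F x' y' :=
  (Finset.single_le_sum (f := fun y' => F x y') (fun y' _ => hF x y') (Finset.mem_univ y)).trans
    (Finset.single_le_sum (f := fun x' => ∑ y', F x' y')
      (fun x' _ => Finset.sum_nonneg fun y' _ => hF x' y') (Finset.mem_univ x))

lemma Num_pos (hP : ∀ x y, 0 ≤ p x * r x y) (i : Fin n) (x y) (h : 0 < p x * r x y) :
    0 < Num p r i x y := by
  have := le_dsum (fun x' y' => if (∀ j, j < i → x' j = x j) ∧ (∀ j, j ≤ i → y' j = y j)
        then p x' * r x' y' else 0) (by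
          intro x' y'; split_ifs
          · exact hP _ _
          · exact le_rfl) x y
  simp only [implies_true, and_self, if_true] at this
  exact h.trans_le this

lemma Den_pos (hP : ∀ x y, 0 ≤ p x * r x y) (i : Fin n) (x y) (h : 0 < p x * r x y) :
    0 < Den p r i x y := by
  have := le_dsum (fun x' y' => if (∀ j, j < i → x' j = x j) ∧ (∀ j, j < i → y' j = y j)
        then p x' * r x' y' else 0) (by
          intro x' y'; split_ifs
          · exact hP _ _
          · exact le_rfl) x y
  simp only [implies_true, and_self, if_true] at this
  exact h.trans_le this

lemma Num_congr (i : Fin n) (x y x' y' : Fin n → Bool) (hx : ∀ j, j < i → x j = x' j)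
    (hy : ∀ j, j ≤ i → y j = y' j) : Num p r i x y = Num p r i x' y' := by
  unfold Num
  apply Finset.sum_congr rfl; intro u _
  apply Finset.sum_congr rfl; intro v _
  have : ((∀ j, j < i → u j = x j) ∧ (∀ j, j ≤ i → v j = y j)) ↔
      ((∀ j, j < i → u j = x' j) ∧ (∀ j, j ≤ i → v j = y' j)) := by
    constructor
    · rintro ⟨a, b⟩
      exact ⟨fun j hj => (a j hj).trans (hx j hj), fun j hj => (b j hj).trans (hy j hj)⟩
    · rintro ⟨a, b⟩
      exact ⟨fun j hj => (a j hj).trans (hx j hj).symm, fun j hj => (b j hj).trans (hy j hj).symm⟩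
  simp only [this]

lemma Den_congr (i : Fin n) (x y x' y' : Fin n → Bool) (hx : ∀ j, j < i → x j = x' j)
    (hy : ∀ j, j < i → y j = y' j) : Den p r i x y = Den p r i x' y' := by
  unfold Den
  apply Finset.sum_congr rfl; intro u _
  apply Finset.sum_congr rfl; intro v _
  have : ((∀ j, j < i → u j = x j) ∧ (∀ j, j < i → v j = y j)) ↔
      ((∀ j, j < i → u j = x' j) ∧ (∀ j, j < i → v j = y' j)) := by
    constructor
    · rintro ⟨a, b⟩
      exact ⟨fun j hj => (a j hj).trans (hx j hj), fun j hj => (b j hj).trans (hy j hj)⟩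
    · rintro ⟨a, b⟩
      exact ⟨fun j hj => (a j hj).trans (hx j hj).symm, fun j hj => (b j hj).trans (hy j hj).symm⟩
  simp only [this]

lemma le_upd_iff (i : Fin n) (v y : Fin n → Bool) (b : Bool) :
    (∀ j, j ≤ i → v j = Function.update y i b j) ↔ ((∀ j, j < i → v j = y j) ∧ v i = b) := by
  constructor
  · intro h
    refine ⟨fun j hj => ?_, ?_⟩
    · rw [h j hj.le, Function.update_of_ne hj.ne]
    · simpa using h i le_rfl
  · rintro ⟨h1, h2⟩ j hj
    rcases hj.lt_or_eq with h | h
    · rw [Function.update_of_ne h.ne, h1 j h]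
    · subst h; simpa using h2

lemma Num_sum (i : Fin n) (x y : Fin n → Bool) :
    ∑ b, Num p r i x (Function.update y i b) = Den p r i x y := by
  unfold Num Den
  rw [Finset.sum_comm]
  apply Finset.sum_congr rfl; intro u _
  rw [Finset.sum_comm]
  apply Finset.sum_congr rfl; intro v _
  simp only [le_upd_iff, Fintype.sum_bool]
  cases hv : v i <;> simp

lemma sum_pair (F : (Fin n → Bool) → (Fin n → Bool) → ℝ) :
    ∑ x, ∑ y, F x y = ∑ z : Fin n → Bool × Bool, F (fun j => (z j).1) (fun j => (z j).2) := by
  rw [← Fintype.sum_prod_type' (f := F)]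
  rw [← Equiv.sum_comp (Equiv.arrowProdEquivProdArrow (Fin n) (fun _ => Bool) (fun _ => Bool))]
  rfl

def bb (D : ℝ) (a c : Bool) : ℝ := if a = c then 1 - D else D

lemma fst_upd (z : Fin n → Bool × Bool) (i : Fin n) (a : Bool × Bool) :
    (fun j => (Function.update z i a j).1) = Function.update (fun j => (z j).1) i a.1 := by
  funext j
  by_cases h : j = i
  · subst h; simp
  · simp [Function.update_of_ne h]

lemma snd_upd (z : Fin n → Bool × Bool) (i : Fin n) (a : Bool × Bool) :
    (fun j => (Function.update z i a j).2) = Function.update (fun j => (z j).2) i a.2 := by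
  funext j
  by_cases h : j = i
  · subst h; simp
  · simp [Function.update_of_ne h]

lemma W_sum (hP : ∀ x y, 0 ≤ p x * r x y) (D : ℝ) (hD0 : 0 ≤ D) (hD1 : D ≤ 1) :
    ∑ x, ∑ y, causalCond p r x y * ∏ i, bb D (x i) (y i) ≤ 1 := by
  rw [sum_pair]
  simp only [causal_eq, ← Finset.prod_mul_distrib]
  refine total_le (n := n) (Z := Bool × Bool)
    (fun i z => Num p r i (fun j => (z j).1) (fun j => (z j).2) /
      Den p r i (fun j => (z j).1) (fun j => (z j).2) * bb D (z i).1 (z i).2) ?_ ?_ ?_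
  · intro i z z' h
    dsimp only
    have h' : ∀ j, j ≤ i → z j = z' j := fun j hj => h j (by have : (j:ℕ) ≤ i := hj; omega)
    rw [h' i le_rfl, Num_congr p r i _ _ (fun j => (z' j).1) (fun j => (z' j).2)
      (fun j hj => by rw [h' j hj.le]) (fun j hj => by rw [h' j hj]),
      Den_congr p r i _ _ (fun j => (z' j).1) (fun j => (z' j).2)
      (fun j hj => by rw [h' j hj.le]) (fun j hj => by rw [h' j hj.le])]
  · intro i z
    apply mul_nonneg (div_nonneg (Num_nonneg p r hP _ _ _) (Den_nonneg p r hP _ _ _))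
    unfold bb; split_ifs <;> linarith
  · intro i z
    simp only [fst_upd, snd_upd, Function.update_self]
    have e1 : ∀ a : Bool × Bool, Num p r i (Function.update (fun j => (z j).1) i a.1)
        (Function.update (fun j => (z j).2) i a.2) =
        Num p r i (fun j => (z j).1) (Function.update (fun j => (z j).2) i a.2) := by
      intro a
      apply Num_congr
      · intro j hj; rw [Function.update_of_ne hj.ne]
      · intro j hj; rfl
    have e2 : ∀ a : Bool × Bool, Den p r i (Function.update (fun j => (z j).1) i a.1)
        (Function.update (fun j => (z j).2) i a.2) =
        Den p r i (fun j => (z j).1) (fun j => (z j).2) := by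
      intro a
      apply Den_congr
      · intro j hj; rw [Function.update_of_ne hj.ne]
      · intro j hj; rw [Function.update_of_ne hj.ne]
    simp only [e1, e2]
    have h := Num_sum p r i (fun j => (z j).1) (fun j => (z j).2)
    rw [Fintype.sum_bool] at h
    rw [Fintype.sum_prod_type]
    simp only [Fintype.sum_bool, bb]
    simp only [if_true, Bool.true_eq_false, Bool.false_eq_true, if_false]
    rw [← h]
    have := div_self_le_one (Num p r i (fun j => (z j).1) (Function.update (fun j => (z j).2) i true)
      + Num p r i (fun j => (z j).1) (Function.update (fun j => (z j).2) i false))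
    rw [add_div] at this
    linarith

lemma log_bb (hn : 1 ≤ n) (D : ℝ) (x y : Fin n → Bool) :
    ∑ i, Real.logb 2 (bb D (x i) (y i)) = n * Real.logb 2 (1 - D) +
      n * hamming n x y * (Real.logb 2 D - Real.logb 2 (1 - D)) := by
  have : ∀ i, Real.logb 2 (bb D (x i) (y i)) = Real.logb 2 (1 - D) +
      (if x i = y i then (0 : ℝ) else 1) * (Real.logb 2 D - Real.logb 2 (1 - D)) := by
    intro i; unfold bb; split_ifs <;> ring
  have hn' : (n : ℝ) ≠ 0 := by positivity
  simp only [this, Finset.sum_add_distrib, ← Finset.sum_mul, hamming, Finset.sum_const,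
    Finset.card_univ, Fintype.card_fin, nsmul_eq_mul]
  rw [← mul_assoc, mul_one_div_cancel hn', one_mul]

lemma ham_nonneg (x y : Fin n → Bool) : 0 ≤ hamming n x y := by
  unfold hamming
  apply mul_nonneg (by positivity)
  apply Finset.sum_nonneg
  intro i _
  split_ifs <;> norm_num

lemma ham_zero (hn : 1 ≤ n) (x y : Fin n → Bool) (h : hamming n x y = 0) (i : Fin n) :
    x i = y i := by
  unfold hamming at h
  have hn' : (1 / (n : ℝ)) ≠ 0 := by positivity
  have h1 := (mul_eq_zero.1 h).resolve_left hn'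
  rw [Finset.sum_eq_zero_iff_of_nonneg (by intro i _; split_ifs <;> norm_num)] at h1
  have := h1 i (Finset.mem_univ _)
  by_contra hc
  simp [hc] at this

lemma val_sum (hn : 1 ≤ n) (hr : IsCondPMF r) (hp1 : ∑ x, p x = 1) (D : ℝ) :
    ∑ x, ∑ y, p x * r x y * (∑ i, Real.logb 2 (bb D (x i) (y i)) - Real.logb 2 (p x))
    = n * Real.logb 2 (1 - D) + n * (∑ x, ∑ y, p x * r x y * hamming n x y) *
       (Real.logb 2 D - Real.logb 2 (1 - D)) - ∑ x, p x * Real.logb 2 (p x) := by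
  have e : ∀ x, ∑ y, p x * r x y * (∑ i, Real.logb 2 (bb D (x i) (y i)) - Real.logb 2 (p x))
     = n * Real.logb 2 (1 - D) * p x + n * (Real.logb 2 D - Real.logb 2 (1 - D)) *
      (∑ y, p x * r x y * hamming n x y) - p x * Real.logb 2 (p x) := by
    intro x
    calc _ = ∑ y, ((n * Real.logb 2 (1 - D) * p x - p x * Real.logb 2 (p x)) * r x y
          + n * (Real.logb 2 D - Real.logb 2 (1 - D)) * (p x * r x y * hamming n x y)) := by
          apply Finset.sum_congr rfl; intro y _
          rw [log_bb hn]; ring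
      _ = _ := by
          rw [Finset.sum_add_distrib, ← Finset.mul_sum, ← Finset.mul_sum, hr.2 x]; ring
  simp only [e, Finset.sum_sub_distrib, Finset.sum_add_distrib, ← Finset.mul_sum, hp1]
  ring

lemma converse (hn : 1 ≤ n) (hr : IsCondPMF r) (hp : ∀ x, 0 ≤ p x) (hp1 : ∑ x, p x = 1)
    (D : ℝ) (hD0 : 0 ≤ D) (hD : D < 1 / 2)
    (hdist : ∑ x, ∑ y, p x * r x y * hamming n x y ≤ D) :
    - (∑ x, p x * Real.logb 2 (p x)) - n * Hb D ≤ directedInfo p r := by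
  have hP : ∀ x y, 0 ≤ p x * r x y := fun x y => mul_nonneg (hp x) (hr.1 x y)
  have hW := W_sum p r hP D hD0 (by linarith)
  have hl2 : 0 < Real.log 2 := Real.log_pos (by norm_num)
  have htot : ∑ x, ∑ y, p x * r x y = 1 := by
    simp only [← Finset.mul_sum, hr.2, mul_one, hp1]
  have hpt : ∀ x y, p x * r x y * (∑ i, Real.logb 2 (bb D (x i) (y i)) - Real.logb 2 (p x))
      + (p x * r x y - causalCond p r x y * ∏ i, bb D (x i) (y i)) / Real.log 2
      ≤ p x * r x y * Real.logb 2 (r x y / causalCond p r x y) := by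
    intro x y
    rcases (hP x y).eq_or_lt with h | h
    · rw [← h]
      simp only [zero_mul, zero_sub, zero_add]
      apply div_nonpos_of_nonpos_of_nonneg _ hl2.le
      rw [neg_nonpos]
      apply mul_nonneg
      · exact Finset.prod_nonneg fun i _ =>
          div_nonneg (Num_nonneg p r hP _ _ _) (Den_nonneg p r hP _ _ _)
      · apply Finset.prod_nonneg; intro i _
        unfold bb; split_ifs <;> linarith
    · have hpx : 0 < p x := (hp x).lt_of_ne (by rintro h0; rw [← h0] at h; simp at h)
      have hrx : 0 < r x y := (hr.1 x y).lt_of_ne (by rintro h0; rw [← h0] at h; simp at h)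
      have hq : 0 < causalCond p r x y := Finset.prod_pos fun i _ =>
          div_pos (Num_pos p r hP _ _ _ h) (Den_pos p r hP _ _ _ h)
      have hb : ∀ i, 0 < bb D (x i) (y i) := by
        intro i
        unfold bb
        split_ifs with hxy
        · linarith
        · rcases hD0.eq_or_lt with h0 | h0
          · exfalso
            apply hxy
            apply ham_zero hn
            have := le_dsum (fun x y => p x * r x y * hamming n x y)
              (fun x y => mul_nonneg (hP x y) (ham_nonneg x y)) x y
            have h3 := ham_nonneg x y
            by_contra h4
            have h5 : 0 < hamming n x y := h3.lt_of_ne (Ne.symm h4)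
            have := mul_pos h h5
            linarith
          · exact h0
      have hB : 0 < ∏ i, bb D (x i) (y i) := Finset.prod_pos fun i _ => hb i
      have hlogB : ∑ i, Real.logb 2 (bb D (x i) (y i)) = Real.logb 2 (∏ i, bb D (x i) (y i)) := by
        rw [Real.logb_prod]; intro i _; exact (hb i).ne'
      rw [hlogB]
      generalize (∏ i, bb D (x i) (y i)) = B at *
      generalize causalCond p r x y = Q at *
      have hlog := Real.log_le_sub_one_of_pos (div_pos (mul_pos hq hB) h)
      rw [Real.log_div (by positivity) (by positivity), Real.log_mul hq.ne' hB.ne',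
        Real.log_mul hpx.ne' hrx.ne'] at hlog
      rw [Real.logb_div hrx.ne' hq.ne']
      simp only [Real.logb]
      have h6 := mul_le_mul_of_nonneg_left hlog h.le
      have h7 : p x * r x y * (Q * B / (p x * r x y) - 1) = Q * B - p x * r x y := by
        field_simp
      rw [h7] at h6
      have e : p x * r x y * (Real.log (r x y) / Real.log 2 - Real.log Q / Real.log 2) -
        (p x * r x y * (Real.log B / Real.log 2 - Real.log (p x) / Real.log 2)
          + (p x * r x y - Q * B) / Real.log 2) =
         (Q * B - p x * r x y - p x * r x y * (Real.log Q + Real.log B -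
          (Real.log (p x) + Real.log (r x y)))) / Real.log 2 := by
        field_simp; ring
      have := div_nonneg (sub_nonneg.2 h6) hl2.le
      rw [← e] at this
      linarith
  have hs : ∑ x, ∑ y, (p x * r x y * (∑ i, Real.logb 2 (bb D (x i) (y i)) - Real.logb 2 (p x))
      + (p x * r x y - causalCond p r x y * ∏ i, bb D (x i) (y i)) / Real.log 2)
      ≤ directedInfo p r :=
    Finset.sum_le_sum fun x _ => Finset.sum_le_sum fun y _ => hpt x y
  simp only [Finset.sum_add_distrib, ← Finset.sum_div, Finset.sum_sub_distrib, htot] at hs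
  have hv := val_sum p r hn hr hp1 D
  rw [hv] at hs
  have h8 : 0 ≤ (1 - ∑ x, ∑ y, causalCond p r x y * ∏ i, bb D (x i) (y i)) / Real.log 2 :=
    div_nonneg (by linarith) hl2.le
  have hc : Real.logb 2 D - Real.logb 2 (1 - D) ≤ 0 := by
    rcases hD0.eq_or_lt with h0 | h0
    · simp [← h0]
    · have := Real.logb_le_logb_of_le (b := 2) (by norm_num) h0 (show D ≤ 1 - D by linarith)
      linarith
  have h9 : n * D * (Real.logb 2 D - Real.logb 2 (1 - D)) ≤
      n * (∑ x, ∑ y, p x * r x y * hamming n x y) * (Real.logb 2 D - Real.logb 2 (1 - D)) := by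
    apply mul_le_mul_of_nonpos_right _ hc
    exact mul_le_mul_of_nonneg_left hdist (by positivity)
  unfold Hb
  nlinarith

end causal

section achiev
variable (p q D : ℝ) {n : ℕ}

def sg (i : Fin n) (x : Fin n → Bool) (c : Bool) : ℝ :=
  bern ((tt p q i x - D) / (1 - 2 * D)) c

def KA (i : Fin n) (x y : Fin n → Bool) : ℝ := sg p q D i x (y i) * bb D (x i) (y i)

def KZ (i : Fin n) (z : Fin n → Bool × Bool) : ℝ :=
  KA p q D i (fun j => (z j).1) (fun j => (z j).2)

lemma sg_congr (i : Fin n) (x x' : Fin n → Bool) (h : ∀ j, j < i → x j = x' j) (c : Bool) :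
    sg p q D i x c = sg p q D i x' c := by
  unfold sg
  rw [tt_dep p q i x x' (fun j hj => h j hj)]

lemma KZ_dep (i : Fin n) : DepLt (i + 1 : ℕ) (KZ p q D i) := by
  intro z z' h
  have h' : ∀ j, j ≤ i → z j = z' j := fun j hj => h j (by have : (j:ℕ) ≤ i := hj; omega)
  unfold KZ KA
  rw [sg_congr p q D i _ (fun j => (z' j).1) (fun j hj => by rw [h' j hj.le])]
  simp only [h' i le_rfl]

lemma KZ_upd (i : Fin n) (z : Fin n → Bool × Bool) (a : Bool × Bool) :
    KZ p q D i (Function.update z i a) = sg p q D i (fun j => (z j).1) a.2 * bb D a.1 a.2 := by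
  unfold KZ KA
  rw [sg_congr p q D i _ (fun j => (z j).1)
    (fun j hj => by rw [Function.update_of_ne hj.ne])]
  simp

lemma sg_sum (i : Fin n) (x : Fin n → Bool) : sg p q D i x true + sg p q D i x false = 1 := by
  simp [sg, bern]

lemma KZ_sum (i : Fin n) (z : Fin n → Bool × Bool) :
    ∑ a, KZ p q D i (Function.update z i a) = 1 := by
  simp only [KZ_upd, Fintype.sum_prod_type, Fintype.sum_bool, bb]
  simp only [if_true, Bool.true_eq_false, Bool.false_eq_true, if_false]
  have := sg_sum p q D i (fun j => (z j).1)
  linear_combination this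

lemma KA_marg (hD : D < 1 / 2) (x : Fin n → Bool) :
    ∑ y : Fin n → Bool, ∏ i, KA p q D i x y = ∏ i, bern (tt p q i x) (x i) := by
  unfold KA
  have h := Finset.prod_univ_sum (fun _ : Fin n => (Finset.univ : Finset Bool))
    (fun i c => sg p q D i x c * bb D (x i) c)
  rw [Fintype.piFinset_univ] at h
  rw [← h]
  apply Finset.prod_congr rfl
  intro i _
  have : 1 - 2 * D ≠ 0 := by linarith
  have hs : (tt p q i x - D) / (1 - 2 * D) * (1 - 2 * D) = tt p q i x - D :=
    div_mul_cancel₀ _ this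
  simp only [Fintype.sum_bool, sg, bern, bb]
  generalize (tt p q i x - D) / (1 - 2 * D) = s at hs
  cases x i
  · simp
    linear_combination -hs
  · simp
    linear_combination hs

def rA (x y : Fin n → Bool) : ℝ := (∏ i, KA p q D i x y) / markovPMF p q x

variable (hp0 : 0 < p) (hp1 : p < 1) (hq0 : 0 < q) (hq1 : q < 1)

include hp0 hp1 hq0 hq1

lemma mk_pos (x : Fin n → Bool) : 0 < markovPMF p q x := by
  rw [markov_eq p q hp0 hq0]
  exact Finset.prod_pos fun i _ => bern_pos (tt_pos p q hp0 hp1 hq0 hq1 i x) _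

lemma joint (x y : Fin n → Bool) : markovPMF p q x * rA p q D x y = ∏ i, KA p q D i x y := by
  have := mk_pos p q hp0 hp1 hq0 hq1 x
  unfold rA
  field_simp

lemma distA (hn : 1 ≤ n) :
    ∑ x, ∑ y, markovPMF p q x * rA p q D x y * hamming n x y = D := by
  simp only [joint p q D hp0 hp1 hq0 hq1]
  rw [sum_pair]
  have hi : ∀ i : Fin n, ∑ z : Fin n → Bool × Bool,
      (if (z i).1 = (z i).2 then (0:ℝ) else 1) * ∏ j, KZ p q D j z = D := by
    intro i
    rw [onestep (KZ p q D) (KZ_dep p q D) (KZ_sum p q D) i]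
    · have : ∀ z : Fin n → Bool × Bool, (∑ a : Bool × Bool,
          (if (Function.update z i a i).1 = (Function.update z i a i).2 then (0:ℝ) else 1) *
            KZ p q D i (Function.update z i a)) = D := by
        intro z
        simp only [KZ_upd, Fintype.sum_prod_type, Fintype.sum_bool, bb, Function.update_self]
        simp only [if_true, Bool.true_eq_false, Bool.false_eq_true, if_false]
        have := sg_sum p q D i (fun j => (z j).1)
        linear_combination D * this
      simp only [this, ← Finset.mul_sum, total (KZ p q D) (KZ_dep p q D) (KZ_sum p q D), mul_one]
    · intro z z' h
      simp only [h i (by omega)]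
  have hn' : (n : ℝ) ≠ 0 := by positivity
  calc _ = (1 / (n:ℝ)) * ∑ i : Fin n, ∑ z : Fin n → Bool × Bool,
      (if (z i).1 = (z i).2 then (0:ℝ) else 1) * ∏ j, KZ p q D j z := by
        rw [Finset.sum_comm, Finset.mul_sum]
        apply Finset.sum_congr rfl
        intro z _
        rw [← Finset.sum_mul]
        unfold hamming KZ
        ring
    _ = D := by
        simp only [hi]
        simp
        field_simp

lemma NumA (i : Fin n) (x y : Fin n → Bool) :
    Num (markovPMF p q) (rA p q D) i x y
      = Den (markovPMF p q) (rA p q D) i x y * sg p q D i x (y i) := by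
  unfold Num Den
  simp only [joint p q D hp0 hp1 hq0 hq1]
  rw [sum_pair, sum_pair]
  have h := onestep (KZ p q D) (KZ_dep p q D) (KZ_sum p q D) i
    (fun z => if (∀ j, j < i → (z j).1 = x j) ∧ (∀ j, j ≤ i → (z j).2 = y j) then (1:ℝ) else 0)
    (by
      intro z z' h
      have h' : ∀ j, j ≤ i → z j = z' j := fun j hj => h j (by have : (j:ℕ) ≤ i := hj; omega)
      dsimp only
      congr 1
      apply propext
      constructor
      · rintro ⟨a, b⟩
        exact ⟨fun j hj => by rw [← h' j hj.le, a j hj], fun j hj => by rw [← h' j hj, b j hj]⟩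
      · rintro ⟨a, b⟩
        exact ⟨fun j hj => by rw [h' j hj.le, a j hj], fun j hj => by rw [h' j hj, b j hj]⟩)
  simp only [ite_mul, one_mul, zero_mul] at h
  refine h.trans ?_
  rw [Finset.sum_mul]
  apply Finset.sum_congr rfl
  intro z _
  have hc : ∀ a : Bool × Bool, ((∀ j, j < i → (Function.update z i a j).1 = x j) ∧
      (∀ j, j ≤ i → (Function.update z i a j).2 = y j)) ↔
      (((∀ j, j < i → (z j).1 = x j) ∧ (∀ j, j < i → (z j).2 = y j)) ∧ a.2 = y i) := by
    intro a
    constructor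
    · rintro ⟨h1, h2⟩
      refine ⟨⟨fun j hj => ?_, fun j hj => ?_⟩, ?_⟩
      · have := h1 j hj; rwa [Function.update_of_ne hj.ne] at this
      · have := h2 j hj.le; rwa [Function.update_of_ne hj.ne] at this
      · simpa using h2 i le_rfl
    · rintro ⟨⟨h1, h2⟩, h3⟩
      refine ⟨fun j hj => ?_, fun j hj => ?_⟩
      · rw [Function.update_of_ne hj.ne]; exact h1 j hj
      · rcases hj.lt_or_eq with h | h
        · rw [Function.update_of_ne h.ne]; exact h2 j h
        · subst h; simpa using h3
  simp only [hc, KZ_upd]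
  by_cases hz : (∀ j, j < i → (z j).1 = x j) ∧ (∀ j, j < i → (z j).2 = y j)
  · rw [if_pos hz]
    simp only [eq_true hz, true_and]
    rw [sg_congr p q D i x (fun j => (z j).1) (fun j hj => (hz.1 j hj).symm)]
    have e : ∑ a : Bool × Bool, (if a.2 = y i then
        sg p q D i (fun j => (z j).1) a.2 * bb D a.1 a.2 else 0)
        = sg p q D i (fun j => (z j).1) (y i) := by
      rw [Fintype.sum_prod_type]
      simp only [Fintype.sum_bool, bb]
      cases y i <;> simp <;> ring
    rw [e, mul_comm]
    rfl
  · rw [if_neg hz]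
    simp [hz]

lemma achiev (hn : 1 ≤ n) (hD0 : 0 ≤ D) (hD : D < 1 / 2)
    (h1 : D ≤ p) (h2 : D ≤ 1 - p) (h3 : D ≤ q) (h4 : D ≤ 1 - q) :
    IsCondPMF (rA p q D (n := n)) ∧ ∑ x : Fin n → Bool, markovPMF p q x = 1 ∧
    directedInfo (markovPMF p q) (rA p q D (n := n)) =
      - (∑ x : Fin n → Bool, markovPMF p q x * Real.logb 2 (markovPMF p q x)) - n * Hb D := by
  have hD2 : 0 < 1 - 2 * D := by linarith
  have hsg : ∀ (i : Fin n) x c, 0 ≤ sg p q D i x c := by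
    intro i x c
    have := tt_bd p q hp0 hp1 hq0 hq1 D hD0 h1 h2 h3 h4 i x
    apply bern_nonneg
    rw [div_le_iff₀ hD2]
    exact ⟨div_nonneg (by linarith) hD2.le, by linarith⟩
  have hbb : ∀ a c, 0 ≤ bb D a c := by intro a c; unfold bb; split_ifs <;> linarith
  have hKA : ∀ (i : Fin n) x y, 0 ≤ KA p q D i x y := fun i x y => mul_nonneg (hsg _ _ _) (hbb _ _)
  have hmk := fun x : Fin n → Bool => mk_pos p q hp0 hp1 hq0 hq1 x
  have hr : IsCondPMF (rA p q D (n := n)) := by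
    constructor
    · intro x y
      exact div_nonneg (Finset.prod_nonneg fun i _ => hKA i x y) (hmk x).le
    · intro x
      unfold rA
      rw [← Finset.sum_div, KA_marg p q D hD, ← markov_eq p q hp0 hq0, div_self (hmk x).ne']
  have htot : ∑ x : Fin n → Bool, markovPMF p q x = 1 := by
    simp only [markov_eq p q hp0 hq0]
    exact total (KM p q (n := n)) (KM_dep p q) (KM_sum p q)
  refine ⟨hr, htot, ?_⟩
  have hP : ∀ x y : Fin n → Bool, 0 ≤ markovPMF p q x * rA p q D x y :=
    fun x y => mul_nonneg (hmk x).le (hr.1 x y)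
  have hv := val_sum (markovPMF p q) (rA p q D) hn hr htot D
  rw [distA p q D hp0 hp1 hq0 hq1 hn] at hv
  have hd : directedInfo (markovPMF p q) (rA p q D (n := n)) =
      ∑ x : Fin n → Bool, ∑ y : Fin n → Bool, markovPMF p q x * rA p q D x y *
        (∑ i, Real.logb 2 (bb D (x i) (y i)) - Real.logb 2 (markovPMF p q x)) := by
    unfold directedInfo
    apply Finset.sum_congr rfl; intro x _
    apply Finset.sum_congr rfl; intro y _
    rcases (hP x y).eq_or_lt with h | h
    · rw [← h]; simp
    · congr 1
      have hj := joint p q D hp0 hp1 hq0 hq1 x y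
      have hK : ∀ i, KA p q D i x y ≠ 0 := by
        intro i hi
        rw [hj, Finset.prod_eq_zero (Finset.mem_univ i) hi] at h
        exact lt_irrefl _ h
      have hs0 : ∀ i, sg p q D i x (y i) ≠ 0 := fun i => left_ne_zero_of_mul (hK i)
      have hb0 : ∀ i, bb D (x i) (y i) ≠ 0 := fun i => right_ne_zero_of_mul (hK i)
      have hq : causalCond (markovPMF p q) (rA p q D) x y = ∏ i, sg p q D i x (y i) := by
        rw [causal_eq]
        apply Finset.prod_congr rfl
        intro i _
        rw [NumA p q D hp0 hp1 hq0 hq1, mul_div_cancel_left₀]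
        exact (Den_pos _ _ hP i x y h).ne'
      have hS : ∏ i, sg p q D i x (y i) ≠ 0 := Finset.prod_ne_zero_iff.2 fun i _ => hs0 i
      have hB : ∏ i, bb D (x i) (y i) ≠ 0 := Finset.prod_ne_zero_iff.2 fun i _ => hb0 i
      rw [hq, ← Real.logb_prod _ _ (fun i _ => hb0 i), ← Real.logb_div hB (hmk x).ne']
      congr 1
      unfold rA KA
      rw [Finset.prod_mul_distrib]
      have := (hmk x).ne'
      field_simp
  rw [hd, hv]
  unfold Hb
  ring

end achiev
end FFRD

open FFRD in
/-- Appendix E: for the stationary asymmetric binary Markov source with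
per-letter Hamming distortion and `0 ≤ D < 1/2`, `D ≤ min{p, 1−p, q, 1−q}`, the `n`-th order
rate distortion function with feed-forward is
`Rₙ(D) = (1/n)·H_b(π₁) + ((n−1)/n)(π₀ H_b(p) + π₁ H_b(q)) − H_b(D)`. -/
theorem markov_feed_forward_rate_distortion
    (p q : ℝ) (hp0 : 0 < p) (hp1 : p < 1) (hq0 : 0 < q) (hq1 : q < 1)
    (n : ℕ) (hn : 1 ≤ n)
    (D : ℝ) (hD0 : 0 ≤ D) (hDhalf : D < 1 / 2)
    (hDmin : D ≤ min (min p (1 - p)) (min q (1 - q))) :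
    Rn n (markovPMF p q) (hamming n) D =
      (1 / (n : ℝ)) * Hb (p / (p + q)) +
      (((n : ℝ) - 1) / (n : ℝ)) * ((q / (p + q)) * Hb p + (p / (p + q)) * Hb q) -
      Hb D := by
  have h1 : D ≤ p := hDmin.trans ((min_le_left _ _).trans (min_le_left _ _))
  have h2 : D ≤ 1 - p := hDmin.trans ((min_le_left _ _).trans (min_le_right _ _))
  have h3 : D ≤ q := hDmin.trans ((min_le_right _ _).trans (min_le_left _ _))
  have h4 : D ≤ 1 - q := hDmin.trans ((min_le_right _ _).trans (min_le_right _ _))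
  obtain ⟨hr, htot, hval⟩ := achiev p q D (n := n) hp0 hp1 hq0 hq1 hn hD0 hDhalf h1 h2 h3 h4
  have hleast : IsLeast {v | ∃ r : (Fin n → Bool) → (Fin n → Bool) → ℝ, IsCondPMF r ∧
      (∑ x, ∑ y, markovPMF p q x * r x y * hamming n x y) ≤ D ∧
      v = directedInfo (markovPMF p q) r}
      (- (∑ x : Fin n → Bool, markovPMF p q x * Real.logb 2 (markovPMF p q x)) - n * Hb D) := by
    constructor
    · exact ⟨rA p q D, hr, (distA p q D hp0 hp1 hq0 hq1 hn).le, hval.symm⟩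
    · rintro v ⟨r, hr', hd, rfl⟩
      exact converse _ _ hn hr' (fun x => (mk_pos p q hp0 hp1 hq0 hq1 x).le) htot D hD0 hDhalf hd
  unfold Rn
  rw [hleast.csInf_eq, entropy p q hp0 hp1 hq0 hq1 hn]
  have hn' : (n : ℝ) ≠ 0 := by positivity
  have hpq : p + q ≠ 0 := by positivity
  field_simp
end
end
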